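/- Let U be an N × N random unitary matrix distributed according to Haar measure on U(N). For all sufficiently large N, E d_K(μ_N, ν) ≥ 3 · Var(𝒩_{N^{-1/2}}) / (2¹² N), where 𝒩_{N^{-1/2}} is the number of eigenvalue angles in an interval of length N^{-1/2}. -/

import Mathlib

open MeasureTheory Real Filter

noncomputable section

/-- The Borel σ-algebra on the unitary group `U(N)`. -/
instance (N : ℕ) : MeasurableSpace (Matrix.unitaryGroup (Fin N) ℂ) := borel _

instance (N : ℕ) : BorelSpace (Matrix.unitaryGroup (Fin N) ℂ) := ⟨rfl⟩

/-- The eigenvalue angles (in `[0, 2π)`, with multiplicity) of a unitary matrix `U`: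
the arguments of the roots of the characteristic polynomial, shifted to lie in `[0, 2π)`. -/
def eigenAngles (N : ℕ) (U : Matrix.unitaryGroup (Fin N) ℂ) : Multiset ℝ :=
  ((U : Matrix (Fin N) (Fin N) ℂ).charpoly.roots).map
    (fun z => if 0 ≤ Complex.arg z then Complex.arg z else Complex.arg z + 2 * π)

open Classical in
/-- `𝒩_A`: the number of eigenvalue angles of `U` lying in the set `A`. -/
def countAngles (N : ℕ) (U : Matrix.unitaryGroup (Fin N) ℂ) (A : Set ℝ) : ℕ :=
  Multiset.card ((eigenAngles N U).filter (· ∈ A))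

/-- `𝒩_θ`: the number of eigenvalue angles of `U` in `[0, θ]`. -/
def countFun (N : ℕ) (U : Matrix.unitaryGroup (Fin N) ℂ) (θ : ℝ) : ℕ :=
  countAngles N U (Set.Icc 0 θ)

/-- The Kolmogorov distance between the empirical spectral measure of `U` and the
uniform measure on the circle: `sup_{0 ≤ θ < 2π} |𝒩_θ/N - θ/(2π)|`. -/
def dK (N : ℕ) (U : Matrix.unitaryGroup (Fin N) ℂ) : ℝ :=
  ⨆ θ : Set.Ico (0:ℝ) (2 * π), |(countFun N U θ : ℝ) / N - (θ : ℝ) / (2 * π)|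

/-- `max_{1 ≤ k ≤ N} |𝒩_{2πk/N} - k|`. -/
def maxDev (N : ℕ) (U : Matrix.unitaryGroup (Fin N) ℂ) : ℝ :=
  ⨆ k : (Finset.Icc 1 N : Finset ℕ), |(countFun N U (2 * π * (k : ℕ) / N) : ℝ) - ((k : ℕ) : ℝ)|

end
namespace KolmHaar
open MvPolynomial Matrix Finset

section MatrixSide
variable {N : ℕ}

/-- The generic matrix. -/
noncomputable abbrev gen (N : ℕ) : Matrix (Fin N) (Fin N) (MvPolynomial (Fin N × Fin N) ℂ) :=
  Matrix.mvPolynomialX (Fin N) (Fin N) ℂ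

/-- The invariant derivation associated with the matrix unit `(a,b)`. -/
noncomputable def dE (a b : Fin N) :
    Derivation ℂ (MvPolynomial (Fin N × Fin N) ℂ) (MvPolynomial (Fin N × Fin N) ℂ) :=
  MvPolynomial.mkDerivation ℂ (fun ij => if ij.1 = a then X (b, ij.2) else 0)

lemma dE_mul (a b : Fin N) (A B : Matrix (Fin N) (Fin N) (MvPolynomial (Fin N × Fin N) ℂ)) :
    (A * B).map (dE a b) = A.map (dE a b) * B + A * B.map (dE a b) := by
  ext1 i j
  simp only [map_apply, mul_apply, Matrix.add_apply, map_sum, Derivation.leibniz, smul_eq_mul]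
  rw [← Finset.sum_add_distrib]
  refine Finset.sum_congr rfl fun x _ => ?_
  ring

lemma dE_gen (a b : Fin N) : (gen N).map (dE a b) = single a b 1 * gen N := by
  ext1 i j
  by_cases h : i = a
  · subst h
    simp [dE, mkDerivation_X]
  · rw [single_mul_apply_of_ne _ _ _ _ _ h]
    simp [dE, mkDerivation_X, h]

lemma dE_pow (a b : Fin N) (k : ℕ) :
    ((gen N) ^ k).map (dE a b) = ∑ l ∈ range k, gen N ^ l * single a b 1 * gen N ^ (k - l) := by
  induction k with
  | zero =>
    ext1 i j
    by_cases h : i = j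
    · subst h; simp
    · simp [h]
  | succ k ih =>
    rw [pow_succ, dE_mul, ih, dE_gen, Finset.sum_range_succ, Finset.sum_mul]
    have h1 : ∀ l ∈ range k, gen N ^ l * single a b 1 * gen N ^ (k - l) * gen N
        = gen N ^ l * single a b 1 * gen N ^ (k + 1 - l) := by
      intro l hl
      have : l < k := Finset.mem_range.1 hl
      rw [mul_assoc, ← pow_succ, show k - l + 1 = k + 1 - l by omega]
    rw [Finset.sum_congr rfl h1, Nat.add_sub_cancel_left, pow_one, mul_assoc (gen N ^ k)]

/-- Generic power sum. -/
noncomputable def pM (N k : ℕ) : MvPolynomial (Fin N × Fin N) ℂ := trace (gen N ^ k)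

lemma dE_pM (a b : Fin N) (k : ℕ) : dE a b (pM N k) = k * (gen N ^ k) b a := by
  have h : dE a b (pM N k) = trace ((gen N ^ k).map (dE a b)) := by
    simp [pM, trace, map_sum]
  rw [h, dE_pow, trace_sum]
  have : ∀ l ∈ range k, trace (gen N ^ l * single a b 1 * gen N ^ (k - l)) = (gen N ^ k) b a := by
    intro l hl
    have : l < k := Finset.mem_range.1 hl
    rw [trace_mul_comm, ← mul_assoc, ← pow_add, Nat.sub_add_cancel this.le, trace_mul_comm,
      trace_single_mul]
    simp
  rw [Finset.sum_congr rfl this]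
  simp

/-- The Casimir operator. -/
noncomputable def cas (f : MvPolynomial (Fin N × Fin N) ℂ) : MvPolynomial (Fin N × Fin N) ℂ :=
  ∑ a, ∑ b, dE a b (dE b a f)

/-- First order operator. -/
noncomputable def gam (k : ℕ) (f : MvPolynomial (Fin N × Fin N) ℂ) :
    MvPolynomial (Fin N × Fin N) ℂ :=
  ∑ a, ∑ b, (gen N ^ k) a b * dE a b f

lemma cas_add (f g : MvPolynomial (Fin N × Fin N) ℂ) : cas (f + g) = cas f + cas g := by
  simp [cas, Finset.sum_add_distrib]

lemma gam_add (k : ℕ) (f g : MvPolynomial (Fin N × Fin N) ℂ) :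
    gam k (f + g) = gam k f + gam k g := by
  simp [gam, mul_add, Finset.sum_add_distrib]

lemma gam_mul (k : ℕ) (f g : MvPolynomial (Fin N × Fin N) ℂ) :
    gam k (f * g) = gam k f * g + f * gam k g := by
  simp only [gam, Finset.sum_mul, Finset.mul_sum, ← Finset.sum_add_distrib, Derivation.leibniz,
    smul_eq_mul]
  refine Finset.sum_congr rfl fun a _ => Finset.sum_congr rfl fun b _ => ?_
  ring

lemma gam_pM (k l : ℕ) : gam k (pM N l) = l * pM N (k + l) := by
  simp only [gam, dE_pM]
  simp only [pM, pow_add, trace, Matrix.diag, mul_apply, Finset.mul_sum]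
  refine Finset.sum_congr rfl fun a _ => Finset.sum_congr rfl fun b _ => ?_
  ring

lemma cas_pM (k : ℕ) : cas (pM N k) = k * ∑ l ∈ range k, pM N l * pM N (k - l) := by
  simp only [cas, dE_pM, Derivation.leibniz, smul_eq_mul]
  have h1 : ∀ a b : Fin N, dE a b ((gen N ^ k) a b)
      = ∑ l ∈ range k, (gen N ^ l) a a * (gen N ^ (k - l)) b b := by
    intro a b
    have := congrFun (congrFun (dE_pow a b k) a) b
    rw [map_apply] at this
    rw [this, Matrix.sum_apply]
    refine Finset.sum_congr rfl fun l _ => ?_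
    rw [mul_assoc, mul_apply, Finset.sum_eq_single a]
    · simp
    · intro x _ hx
      rw [single_mul_apply_of_ne _ _ _ _ _ hx, mul_zero]
    · simp
  have h2 : ∀ a b : Fin N, dE a b ((k : MvPolynomial (Fin N × Fin N) ℂ)) = 0 := by
    intro a b
    exact Derivation.map_natCast _ _
  simp only [h1, h2, mul_zero, add_zero, ← Finset.mul_sum]
  congr 1
  simp only [pM, trace, Matrix.diag, Finset.sum_mul_sum]
  calc _ = ∑ a, ∑ l ∈ range k, ∑ b, (gen N ^ l) a a * (gen N ^ (k - l)) b b := by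
        refine Finset.sum_congr rfl fun a _ => Finset.sum_comm
    _ = _ := Finset.sum_comm

lemma cas_mul_pM (f : MvPolynomial (Fin N × Fin N) ℂ) (k : ℕ) :
    cas (f * pM N k) = cas f * pM N k + 2 * k * gam k f + f * cas (pM N k) := by
  have h : ∀ a b : Fin N, dE a b (dE b a (f * pM N k)) = dE a b (dE b a f) * pM N k
      + k * ((gen N ^ k) b a * dE b a f) + k * ((gen N ^ k) a b * dE a b f)
      + f * dE a b (dE b a (pM N k)) := by
    intro a b
    rw [Derivation.leibniz, map_add]
    simp only [smul_eq_mul, Derivation.leibniz, dE_pM]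
    ring
  simp only [cas, h, Finset.sum_add_distrib, ← Finset.mul_sum, Finset.sum_mul]
  have h3 : ∑ a, ∑ b, (gen N ^ k) b a * dE b a f = gam k f := by
    rw [Finset.sum_comm]; rfl
  have h4 : ∑ a, ∑ b, (gen N ^ k) a b * dE a b f = gam k f := rfl
  rw [h3, h4]
  ring

end MatrixSide

section EigSide
variable {N : ℕ}

/-- `D_i = z_i ∂_i`. -/
noncomputable def dD (i : Fin N) : Derivation ℂ (MvPolynomial (Fin N) ℂ) (MvPolynomial (Fin N) ℂ) :=
  MvPolynomial.mkDerivation ℂ (fun j => if j = i then X i else 0)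

/-- `V_k = ∑ z_i^{k+1} ∂_i`. -/
noncomputable def dV (N k : ℕ) :
    Derivation ℂ (MvPolynomial (Fin N) ℂ) (MvPolynomial (Fin N) ℂ) :=
  MvPolynomial.mkDerivation ℂ (fun j => X j ^ (k + 1))

/-- Vandermonde polynomial. -/
noncomputable def vdm (N : ℕ) : MvPolynomial (Fin N) ℂ := (vandermonde (fun i : Fin N => (X i : MvPolynomial (Fin N) ℂ))).det

/-- power sum -/
noncomputable abbrev pA (N k : ℕ) : MvPolynomial (Fin N) ℂ := psum (Fin N) ℂ k

/-- Second order operator. -/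
noncomputable def tT (f : MvPolynomial (Fin N) ℂ) : MvPolynomial (Fin N) ℂ :=
  ∑ i, dD i (dD i f)

lemma dD_X_pow (i j : Fin N) (k : ℕ) : dD i ((X j : MvPolynomial (Fin N) ℂ) ^ k) =
    if j = i then (k : MvPolynomial (Fin N) ℂ) * X i ^ k else 0 := by
  rw [Derivation.leibniz_pow]
  by_cases h : j = i
  · subst h
    cases k with
    | zero => simp
    | succ k => simp [dD, mkDerivation_X, pow_succ]
  · simp [dD, mkDerivation_X, h]

lemma dD_pA (i : Fin N) (k : ℕ) : dD i (pA N k) = (k : MvPolynomial (Fin N) ℂ) * X i ^ k := by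
  simp only [pA, psum, map_sum, dD_X_pow]
  simp

lemma dV_X_pow (j : Fin N) (k l : ℕ) : dV N k ((X j : MvPolynomial (Fin N) ℂ) ^ l) =
    (l : MvPolynomial (Fin N) ℂ) * X j ^ (k + l) := by
  rw [Derivation.leibniz_pow]
  cases l with
  | zero => simp
  | succ l =>
    simp only [dV, mkDerivation_X, smul_eq_mul, nsmul_eq_mul, Nat.add_sub_cancel]
    ring

lemma dV_pA (k l : ℕ) : dV N k (pA N l) = l * pA N (k + l) := by
  simp only [pA, psum, map_sum, dV_X_pow, Finset.mul_sum]

lemma dV_eq (k : ℕ) (f : MvPolynomial (Fin N) ℂ) : dV N k f = ∑ i, X i ^ k * dD i f := by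
  induction f using MvPolynomial.induction_on with
  | C a => simp [Derivation.map_algebraMap, ← algebraMap_eq]
  | add p q hp hq => simp [hp, hq, mul_add, Finset.sum_add_distrib]
  | mul_X p j hp =>
    simp only [Derivation.leibniz, smul_eq_mul, hp, mul_add, Finset.sum_add_distrib,
      Finset.mul_sum]
    congr 1
    · have h : ∀ i : Fin N, dD i (X j : MvPolynomial (Fin N) ℂ) = if j = i then X i else 0 := by
        intro i; simp [dD, mkDerivation_X]
      simp only [h]
      rw [Finset.sum_eq_single j]
      · simp [dV, mkDerivation_X]; ring
      · intro b _ hb; simp [Ne.symm hb]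
      · simp
    · exact Finset.sum_congr rfl fun i _ => by ring

lemma vdm_eq_prod : vdm N = ∏ i : Fin N, ∏ j ∈ Finset.Ioi i, (X j - X i : MvPolynomial (Fin N) ℂ) := by
  rw [vdm, det_vandermonde]

lemma deriv_prod {ι : Type*} {A : Type*} [CommRing A] [Algebra ℂ A] (D : Derivation ℂ A A)
    (s : Finset ι) (f h : ι → A) (hf : ∀ i ∈ s, D (f i) = f i * h i) :
    D (∏ i ∈ s, f i) = (∏ i ∈ s, f i) * ∑ i ∈ s, h i := by
  classical
  induction s using Finset.induction_on with
  | empty => simp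
  | insert a s ha ih =>
    rw [Finset.prod_insert ha, Finset.sum_insert ha, Derivation.leibniz,
      ih (fun i hi => hf i (Finset.mem_insert_of_mem hi)), hf a (Finset.mem_insert_self _ _)]
    simp only [smul_eq_mul]; ring

/-- complete homogeneous in two variables -/
noncomputable def hh (k : ℕ) (i j : Fin N) : MvPolynomial (Fin N) ℂ :=
  ∑ l ∈ range (k + 1), X i ^ l * X j ^ (k - l)

lemma hh_comm (k : ℕ) (i j : Fin N) : hh k i j = hh k j i := by
  unfold hh
  rw [← Finset.sum_range_reflect]
  refine Finset.sum_congr rfl fun l hl => ?_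
  have : l < k + 1 := Finset.mem_range.1 hl
  rw [show k + 1 - 1 - l = k - l by omega, show k - (k - l) = l by omega, mul_comm]

lemma dV_vdm' (k : ℕ) : dV N k (vdm N) = vdm N * ∑ i, ∑ j ∈ Finset.Ioi i, hh k i j := by
  rw [vdm_eq_prod]
  refine deriv_prod _ _ _ _ fun i _ => ?_
  refine deriv_prod _ _ _ _ fun j _ => ?_
  have : ∀ j : Fin N, dV N k (X j : MvPolynomial (Fin N) ℂ) = X j ^ (k + 1) := by
    intro j; simp [dV, mkDerivation_X]
  rw [map_sub, this, this, hh_comm]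
  have := (Commute.all (X j : MvPolynomial (Fin N) ℂ) (X i)).geom_sum₂_mul (n := k + 1)
  rw [← this, hh, mul_comm]
  simp

lemma sum_hh (k : ℕ) : 2 * ∑ i : Fin N, ∑ j ∈ Finset.Ioi i, hh k i j =
    ∑ l ∈ range (k + 1), pA N l * pA N (k - l) - (k + 1) * pA N k := by
  have h1 : ∑ i : Fin N, ∑ j, hh k i j = ∑ l ∈ range (k + 1), pA N l * pA N (k - l) := by
    simp only [hh, pA, psum, Finset.sum_mul_sum]
    calc _ = ∑ i : Fin N, ∑ l ∈ range (k + 1), ∑ j, (X i ^ l * X j ^ (k - l) : MvPolynomial (Fin N) ℂ) := by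
          refine Finset.sum_congr rfl fun a _ => Finset.sum_comm
      _ = _ := Finset.sum_comm
  have h2 : ∑ i : Fin N, hh k i i = (k + 1) * pA N k := by
    simp only [hh, pA, psum, Finset.mul_sum]
    refine Finset.sum_congr rfl fun i _ => ?_
    rw [Finset.sum_congr rfl (g := fun _ => X i ^ k)]
    · simp
    · intro l hl
      have : l < k + 1 := Finset.mem_range.1 hl
      rw [← pow_add, show l + (k - l) = k by omega]
  have h3 : ∀ i : Fin N, ∑ j, hh k i j = ∑ j ∈ Finset.Ioi i, hh k i j + hh k i i
      + ∑ j ∈ Finset.Iio i, hh k i j := by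
    intro i
    rw [← Finset.sum_filter_add_sum_filter_not Finset.univ (fun j => i < j),
      ← Finset.sum_filter_add_sum_filter_not (Finset.univ.filter (fun j => ¬ i < j)) (fun j => j = i)]
    have e1 : Finset.univ.filter (fun j => i < j) = Finset.Ioi i := by ext; simp
    have e2 : (Finset.univ.filter (fun j => ¬ i < j)).filter (fun j => j = i) = {i} := by
      ext x; simp; rintro rfl; exact le_rfl
    have e3 : (Finset.univ.filter (fun j => ¬ i < j)).filter (fun j => ¬ j = i) = Finset.Iio i := by
      ext x; simp; exact ⟨fun h => lt_of_le_of_ne h.1 h.2, fun h => ⟨h.le, h.ne⟩⟩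
    rw [e1, e2, e3]; simp [add_assoc]
  have h4 : ∑ i : Fin N, ∑ j ∈ Finset.Iio i, hh k i j = ∑ i : Fin N, ∑ j ∈ Finset.Ioi i, hh k i j := by
    rw [Finset.sum_comm' (t' := Finset.univ) (s' := fun j => Finset.Ioi j)]
    · exact Finset.sum_congr rfl fun i _ => Finset.sum_congr rfl fun j _ => hh_comm _ _ _
    · simp
  rw [← h1, ← h2]
  simp only [h3, Finset.sum_add_distrib, h4]
  ring

lemma dV_vdm (k : ℕ) : 2 * dV N k (vdm N) =
    (∑ l ∈ range (k + 1), pA N l * pA N (k - l) - (k + 1) * pA N k) * vdm N := by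
  rw [dV_vdm', ← sum_hh]; ring

lemma dD_monomial (i : Fin N) (α : Fin N →₀ ℕ) (c : ℂ) :
    dD i (monomial α c) = (α i : ℂ) • monomial α c := by
  rw [dD, mkDerivation_monomial, Finsupp.sum]
  by_cases hi : i ∈ α.support
  · rw [Finset.sum_eq_single i]
    · simp only [if_true, smul_eq_mul]
      have : (X i : MvPolynomial (Fin N) ℂ) = monomial (Finsupp.single i 1) 1 := rfl
      rw [this, monomial_mul, tsub_add_cancel_of_le]
      · simp [smul_monomial, mul_comm]
      · rw [Finsupp.single_le_iff]
        exact Nat.one_le_iff_ne_zero.2 (Finsupp.mem_support_iff.1 hi)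
    · intro b _ hb; simp [hb]
    · intro h; exact absurd hi h
  · rw [Finset.sum_eq_zero]
    · have : α i = 0 := by simpa using hi
      simp [this]
    · intro b hb
      have : b ≠ i := by rintro rfl; exact hi hb
      simp [this]

lemma tT_monomial (α : Fin N →₀ ℕ) (c : ℂ) :
    tT (monomial α c) = (∑ i, ((α i : ℂ) ^ 2)) • monomial α c := by
  simp only [tT, dD_monomial, Derivation.map_smul, Finset.sum_smul, smul_smul, pow_two]

lemma dV0_monomial (α : Fin N →₀ ℕ) (c : ℂ) :
    dV N 0 (monomial α c) = (∑ i, (α i : ℂ)) • monomial α c := by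
  simp only [dV_eq, pow_zero, one_mul, dD_monomial, Finset.sum_smul]

end EigSide
end KolmHaar

namespace KolmHaar
open MvPolynomial Matrix Finset

section Spectral
variable {N : ℕ}

lemma tT_add (f g : MvPolynomial (Fin N) ℂ) : tT (f + g) = tT f + tT g := by
  simp [tT, Finset.sum_add_distrib]

lemma tT_smul (c : ℂ) (f : MvPolynomial (Fin N) ℂ) : tT (c • f) = c • tT f := by
  simp only [tT, Derivation.map_smul, Finset.smul_sum]

lemma coeff_tT (α : Fin N →₀ ℕ) (f : MvPolynomial (Fin N) ℂ) :
    coeff α (tT f) = (∑ i, ((α i : ℂ) ^ 2)) * coeff α f := by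
  induction f using MvPolynomial.induction_on' with
  | monomial u a =>
    rw [tT_monomial, coeff_smul, coeff_monomial]
    split_ifs with h
    · subst h; simp
    · simp
  | add p q hp hq => rw [tT_add, coeff_add, coeff_add, hp, hq]; ring

lemma coeff_dV0 (α : Fin N →₀ ℕ) (f : MvPolynomial (Fin N) ℂ) :
    coeff α (dV N 0 f) = (∑ i, (α i : ℂ)) * coeff α f := by
  induction f using MvPolynomial.induction_on' with
  | monomial u a =>
    rw [dV0_monomial, coeff_smul, coeff_monomial]
    split_ifs with h
    · subst h; simp
    · simp
  | add p q hp hq => rw [map_add, coeff_add, coeff_add, hp, hq]; ring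

/-- exponent `m + ρ` -/
noncomputable def rhoE (N m : ℕ) : Fin N →₀ ℕ := Finsupp.equivFunOnFinite.symm (fun i => m + (i : ℕ))

lemma rhoE_apply (m : ℕ) (i : Fin N) : rhoE N m i = m + i := rfl

lemma vdm_expand : vdm N = ∑ ϖ : Equiv.Perm (Fin N), ((Equiv.Perm.sign ϖ : ℤ) : ℂ) •
    monomial ((rhoE N 0).mapDomain ϖ) 1 := by
  rw [vdm, det_apply]
  refine Finset.sum_congr rfl fun ϖ _ => ?_
  have : ∏ i, vandermonde (fun i : Fin N => (X i : MvPolynomial (Fin N) ℂ)) (ϖ i) i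
      = monomial ((rhoE N 0).mapDomain ϖ) 1 := by
    rw [monomial_eq, Finsupp.prod_fintype _ _ (by simp)]
    simp only [vandermonde_apply, C_1, one_mul]
    rw [← Equiv.prod_comp ϖ (fun i => (X i : MvPolynomial (Fin N) ℂ) ^ ((rhoE N 0).mapDomain ϖ) i)]
    refine Finset.prod_congr rfl fun i _ => ?_
    rw [Finsupp.mapDomain_apply ϖ.injective, rhoE_apply, zero_add]
  rw [this]
  rcases Int.units_eq_one_or (Equiv.Perm.sign ϖ) with h | h <;> simp [h]

lemma sum_perm (ϖ : Equiv.Perm (Fin N)) (v : Fin N →₀ ℕ) (F : ℕ → ℂ) :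
    ∑ i, F ((v.mapDomain ϖ) i) = ∑ i, F (v i) := by
  rw [← Equiv.sum_comp ϖ (fun i => F ((v.mapDomain ϖ) i))]
  refine Finset.sum_congr rfl fun i _ => ?_
  rw [Finsupp.mapDomain_apply ϖ.injective]

lemma tT_sum {ι : Type*} (s : Finset ι) (f : ι → MvPolynomial (Fin N) ℂ) :
    tT (∑ i ∈ s, f i) = ∑ i ∈ s, tT (f i) := by
  simp only [tT, map_sum]; exact Finset.sum_comm

lemma tT_vdm : tT (vdm N) = (∑ i : Fin N, ((i : ℕ) : ℂ) ^ 2) • vdm N := by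
  rw [vdm_expand, tT_sum, Finset.smul_sum]
  refine Finset.sum_congr rfl fun ϖ _ => ?_
  rw [tT_smul, tT_monomial, sum_perm ϖ _ (fun x => (x : ℂ) ^ 2), smul_comm]
  simp [rhoE_apply]

lemma dV0_vdm : dV N 0 (vdm N) = (∑ i : Fin N, ((i : ℕ) : ℂ)) • vdm N := by
  rw [vdm_expand, map_sum, Finset.smul_sum]
  refine Finset.sum_congr rfl fun ϖ _ => ?_
  rw [Derivation.map_smul, dV0_monomial, sum_perm ϖ _ (fun x => (x : ℂ)), smul_comm]
  simp [rhoE_apply]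

lemma rename_vdm (ϖ : Equiv.Perm (Fin N)) :
    rename ϖ (vdm N) = ((Equiv.Perm.sign ϖ : ℤ) : ℂ) • vdm N := by
  have h1 : rename ϖ (vdm N) = (vandermonde (fun i : Fin N => (X (ϖ i) : MvPolynomial (Fin N) ℂ))).det := by
    rw [vdm, AlgHom.map_det]
    congr 1
    ext1 i j
    simp [vandermonde_apply]
  rw [h1]
  have h2 : vandermonde (fun i : Fin N => (X (ϖ i) : MvPolynomial (Fin N) ℂ)) =
      (vandermonde (fun i : Fin N => (X i : MvPolynomial (Fin N) ℂ))).submatrix ϖ id := by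
    ext1 i j; simp [vandermonde_apply]
  rw [h2, det_permute]
  rcases Int.units_eq_one_or (Equiv.Perm.sign ϖ) with h | h <;> simp [h, vdm]

lemma vdm_ne_zero : vdm N ≠ 0 := by
  rw [vdm, Ne, ← Ne, det_vandermonde_ne_zero_iff]
  exact X_injective

/-- The generic symmetric function ring. -/
abbrev SS := MvPolynomial ℕ ℂ

/-- matrix realization -/
noncomputable def tauM (N : ℕ) : SS →ₐ[ℂ] MvPolynomial (Fin N × Fin N) ℂ := aeval (fun k => pM N k)
/-- eigenvalue realization -/
noncomputable def sigA (N : ℕ) : SS →ₐ[ℂ] MvPolynomial (Fin N) ℂ := aeval (fun k => pA N k)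

lemma tauM_X (k : ℕ) : tauM N (X k) = pM N k := by simp [tauM]
lemma sigA_X (k : ℕ) : sigA N (X k) = pA N k := by simp [sigA]

lemma sigA_symm (q : SS) (ϖ : Equiv.Perm (Fin N)) : rename ϖ (sigA N q) = sigA N q := by
  have : (rename ϖ).comp (sigA N) = sigA N := by
    refine MvPolynomial.algHom_ext fun k => ?_
    rw [AlgHom.comp_apply, sigA_X]
    exact psum_isSymmetric _ _ _ ϖ
  exact DFunLike.congr_fun this q

lemma pA_zero : pA N 0 = (N : MvPolynomial (Fin N) ℂ) := by simp [pA]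

lemma exists_gam (k : ℕ) (q : SS) : ∃ r : SS, gam k (tauM N q) = tauM N r ∧
    dV N k (sigA N q) = sigA N r := by
  induction q using MvPolynomial.induction_on with
  | C a =>
    refine ⟨0, ?_, ?_⟩
    · simp [gam, ← algebraMap_eq]
    · simp [← algebraMap_eq]
  | add p q hp hq =>
    obtain ⟨r1, h1, h2⟩ := hp
    obtain ⟨r2, h3, h4⟩ := hq
    refine ⟨r1 + r2, ?_, ?_⟩
    · rw [map_add, gam_add, h1, h3, map_add]
    · rw [map_add, map_add, h2, h4, map_add]
  | mul_X p l hp =>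
    obtain ⟨r, h1, h2⟩ := hp
    refine ⟨r * X l + p * ((l : SS) * X (k + l)), ?_, ?_⟩
    · simp only [map_mul, map_add, map_natCast, tauM_X, gam_mul, gam_pM, h1]
    · simp only [map_mul, map_add, map_natCast, sigA_X, Derivation.leibniz, smul_eq_mul, dV_pA, h2]
      ring

lemma tT_mul_pA (f : MvPolynomial (Fin N) ℂ) (k : ℕ) :
    tT (f * pA N k) = tT f * pA N k + 2 * k * dV N k f + k ^ 2 * (pA N k * f) := by
  have h : ∀ i : Fin N, dD i (dD i (f * pA N k)) = dD i (dD i f) * pA N k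
      + 2 * (k : MvPolynomial (Fin N) ℂ) * (X i ^ k * dD i f) + (k : MvPolynomial (Fin N) ℂ) ^ 2 * (X i ^ k * f) := by
    intro i
    rw [Derivation.leibniz, map_add]
    simp only [smul_eq_mul, Derivation.leibniz, dD_pA, Derivation.map_natCast, dD_X_pow, if_true]
    have : dD i (X i : MvPolynomial (Fin N) ℂ) = X i := by simpa using dD_X_pow i i 1
    ring
  simp only [tT, h, Finset.sum_add_distrib, ← Finset.mul_sum, ← Finset.sum_mul, dV_eq]
  rfl

lemma exists_cas (q : SS) : ∃ r : SS, cas (tauM N q) = tauM N r ∧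
    tT (sigA N q * vdm N) = (sigA N r + (N - 1) * dV N 0 (sigA N q)
      + (∑ i : Fin N, ((i : ℕ) : ℂ) ^ 2) • sigA N q) * vdm N := by
  induction q using MvPolynomial.induction_on with
  | C a =>
    refine ⟨0, ?_, ?_⟩
    · simp [cas, ← algebraMap_eq]
    · have : sigA N (C a) = C a := by simp [sigA, ← algebraMap_eq]
      rw [this, C_mul', tT_smul, tT_vdm]
      simp [← algebraMap_eq]
      simp [Algebra.smul_def]
      ring
  | add p q hp hq =>
    obtain ⟨r1, h1, h2⟩ := hp
    obtain ⟨r2, h3, h4⟩ := hq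
    refine ⟨r1 + r2, ?_, ?_⟩
    · rw [map_add, cas_add, h1, h3, map_add]
    · rw [map_add, add_mul, tT_add, h2, h4, map_add, map_add, smul_add]
      ring
  | mul_X p k hp =>
    obtain ⟨r, h1, h2⟩ := hp
    obtain ⟨g, h3, h4⟩ := exists_gam (N := N) k p
    refine ⟨r * X k + 2 * (k : SS) * g + p * ((k : SS) * ∑ l ∈ range k, X l * X (k - l)), ?_, ?_⟩
    · simp only [map_mul, map_add, map_natCast, map_sum, map_ofNat, tauM_X, cas_mul_pM, h1, h3, cas_pM]
    · have e1 := dV_vdm (N := N) k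
      rw [Finset.sum_range_succ, Nat.sub_self, pA_zero] at e1
      simp only [map_mul, map_add, map_natCast, map_sum, map_ofNat, sigA_X]
      rw [mul_right_comm, tT_mul_pA, h2]
      simp only [Derivation.leibniz, smul_eq_mul, dV_pA, h4, zero_add]
      rw [← smul_mul_assoc]
      linear_combination (k : MvPolynomial (Fin N) ℂ) * sigA N p * e1

end Spectral

section Comb
variable {N : ℕ}

lemma comb_core (m : ℕ) (α : Fin N → ℕ) (hα : Function.Injective α)
    (he : ∑ i, ((α i : ℤ) ^ 2 - (2 * m + N - 1) * α i) =
      ∑ i : Fin N, (((m + i : ℕ) : ℤ) ^ 2 - (2 * m + N - 1) * ((m + i : ℕ) : ℤ))) :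
    ∃ ϖ : Equiv.Perm (Fin N), ∀ i, α i = m + ϖ i := by
  classical
  set w : ℕ → ℤ := fun x => ((x : ℤ) - m) * (x - m - N + 1) with hw
  have hwx : ∀ x : ℕ, (x : ℤ) ^ 2 - (2 * m + N - 1) * x = w x - m * (m + N - 1) := by
    intro x; simp only [hw]; ring
  simp only [hwx, Finset.sum_sub_distrib] at he
  have he' : ∑ i, w (α i) = ∑ i : Fin N, w (m + i) := by linarith
  set B := Finset.univ.image α
  set I := Finset.univ.image (fun i : Fin N => m + (i : ℕ))
  have hI : ∑ i : Fin N, w (m + i) = ∑ x ∈ I, w x := by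
    rw [Finset.sum_image]
    intro a _ b _ h; exact Fin.ext (by simpa using h)
  have hB : ∑ i, w (α i) = ∑ x ∈ B, w x := by
    rw [Finset.sum_image]; intro a _ b _ h; exact hα h
  rw [hI, hB, ← Finset.sum_sdiff_eq_sum_sdiff_iff] at he'
  have hmem : ∀ x, x ∈ I ↔ m ≤ x ∧ x < m + N := by
    intro x; simp only [I, Finset.mem_image, Finset.mem_univ, true_and]
    constructor
    · rintro ⟨a, rfl⟩; omega
    · rintro ⟨h1, h2⟩; exact ⟨⟨x - m, by omega⟩, by simp; omega⟩
  have hneg : ∑ x ∈ I \ B, w x ≤ 0 := by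
    refine Finset.sum_nonpos fun x hx => ?_
    have := (hmem x).1 (Finset.mem_sdiff.1 hx).1
    simp only [hw]
    exact mul_nonpos_of_nonneg_of_nonpos (by omega) (by omega)
  have hemp : B \ I = ∅ := by
    by_contra hne
    have hne := Finset.nonempty_iff_ne_empty.2 hne
    have : 0 < ∑ x ∈ B \ I, w x := by
      refine Finset.sum_pos (fun x hx => ?_) hne
      have h1 := (Finset.mem_sdiff.1 hx)
      obtain ⟨i, -, -⟩ := Finset.mem_image.1 h1.1
      have hN : 0 < N := i.pos
      have h2 := h1.2
      rw [hmem] at h2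
      simp only [hw]
      by_cases h3 : m ≤ x
      · exact mul_pos (by omega) (by omega)
      · exact mul_pos_of_neg_of_neg (by omega) (by omega)
    linarith
  have hsub : ∀ i, m ≤ α i ∧ α i < m + N := by
    intro i
    rw [← hmem]
    exact (Finset.sdiff_eq_empty_iff_subset.1 hemp) (Finset.mem_image_of_mem _ (Finset.mem_univ _))
  let g : Fin N → Fin N := fun i => ⟨α i - m, by have := hsub i; omega⟩
  have hg : Function.Injective g := by
    intro a b hab
    apply hα
    have := congrArg Fin.val hab
    simp only [g] at this
    have h1 := hsub a
    have h2 := hsub b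
    omega
  refine ⟨Equiv.ofBijective g (Finite.injective_iff_bijective.1 hg), fun i => ?_⟩
  have := hsub i
  simp [g]; omega

end Comb

section Functional
variable {N : ℕ}

/-- eigenvalue of the shifted operator -/
noncomputable def evE (N m : ℕ) (α : Fin N →₀ ℕ) : ℂ :=
  ∑ i, (α i : ℂ) ^ 2 - (2 * m + N - 1) * ∑ i, (α i : ℂ)

lemma coeff_swap (q : SS) (ϖ : Equiv.Perm (Fin N)) (α : Fin N →₀ ℕ) :
    coeff (α.mapDomain ϖ) (sigA N q * vdm N) =
      ((Equiv.Perm.sign ϖ : ℤ) : ℂ) * coeff α (sigA N q * vdm N) := by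
  have h := coeff_rename_mapDomain ϖ ϖ.injective (sigA N q * vdm N) α
  rw [map_mul, sigA_symm, rename_vdm, mul_smul_comm, coeff_smul] at h
  rw [← h]
  rcases Int.units_eq_one_or (Equiv.Perm.sign ϖ) with h | h <;> simp [h]

lemma functional_spectral (m : ℕ) (ℓ : MvPolynomial (Fin N × Fin N) ℂ →ₗ[ℂ] ℂ)
    (hE : ∀ a b P, ℓ (dE a b P) = if a = b then m * ℓ P else 0)
    (hker : ∀ q : SS, sigA N q = 0 → ℓ (tauM N q) = 0) (E : Finset ℂ)
    (he : ∀ e ∈ E, e ≠ evE N m (rhoE N m)) : ∀ q : SS,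
    (∀ α, coeff α (sigA N q * vdm N) ≠ 0 → evE N m α ∈ E) → ℓ (tauM N q) = 0 := by
  classical
  induction E using Finset.induction_on with
  | empty =>
    intro q hq
    apply hker
    have : sigA N q * vdm N = 0 := by
      ext α
      by_contra h
      exact absurd (hq α h) (by simp)
    exact (mul_eq_zero.1 this).resolve_right vdm_ne_zero
  | insert e E hne ih =>
    intro q hq
    obtain ⟨r, hr1, hr2⟩ := exists_cas (N := N) q
    obtain ⟨g, hg1, hg2⟩ := exists_gam (N := N) 0 q
    set c2 : ℂ := ∑ i : Fin N, ((i : ℕ) : ℂ) ^ 2 with hc2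
    set c1 : ℂ := ∑ i : Fin N, ((i : ℕ) : ℂ) with hc1
    have hl1 : ℓ (tauM N r) = m * m * N * ℓ (tauM N q) := by
      rw [← hr1, cas]
      simp only [map_sum, hE, Finset.sum_ite_eq, Finset.mem_univ, if_true]
      simp
      ring
    have hl2 : ℓ (tauM N g) = m * N * ℓ (tauM N q) := by
      rw [← hg1, gam]
      have : ∀ a : Fin N, ∑ b, ((gen N) ^ 0) a b * dE a b (tauM N q) = dE a a (tauM N q) := by
        intro a
        rw [Finset.sum_eq_single a]
        · simp
        · intro b _ hb; simp [Matrix.one_apply_ne hb.symm]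
        · simp
      simp only [this, map_sum, hE, if_true]
      simp
      ring
    -- the image under the operator minus e
    obtain ⟨k1, hk1⟩ : ∃ k1 : ℂ, k1 = (N : ℂ) - 1 := ⟨_, rfl⟩
    obtain ⟨k2, hk2⟩ : ∃ k2 : ℂ, k2 = 2 * (m : ℂ) + N - 1 := ⟨_, rfl⟩
    set q' : SS := r + C k1 * g + C c2 * q - C k2 * (g + C c1 * q) - C e * q with hq'
    have hsC : ∀ a : ℂ, sigA N (C a) = C a := fun a => by simp [sigA, ← algebraMap_eq]
    have htC : ∀ a : ℂ, tauM N (C a) = C a := fun a => by simp [tauM, ← algebraMap_eq]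
    have hq'1 : sigA N q' * vdm N = tT (sigA N q * vdm N)
        - (2 * (m : ℂ) + N - 1) • dV N 0 (sigA N q * vdm N) - e • (sigA N q * vdm N) := by
      rw [hr2, Derivation.leibniz, dV0_vdm, hg2]
      simp only [hq', hk1, hk2, map_sub, map_add, map_mul, hsC, smul_eq_mul, MvPolynomial.smul_eq_C_mul, map_natCast,
        C_1, map_one, map_ofNat]
      ring
    have hco : ∀ α, coeff α (sigA N q' * vdm N) = (evE N m α - e) * coeff α (sigA N q * vdm N) := by
      intro α
      rw [hq'1, coeff_sub, coeff_sub, coeff_smul, coeff_smul, coeff_tT, coeff_dV0, evE]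
      simp only [smul_eq_mul]; ring
    have h0 : ℓ (tauM N q') = 0 := by
      apply ih (fun x hx => he x (Finset.mem_insert_of_mem hx))
      intro α hα
      rw [hco] at hα
      have h1 := hq α (right_ne_zero_of_mul hα)
      rcases Finset.mem_insert.1 h1 with h | h
      · exact absurd (by rw [h, sub_self]) (left_ne_zero_of_mul hα)
      · exact h
    have h1 : ℓ (tauM N q') = (m * m * N + (N - 1) * (m * N) + c2 - (2 * m + N - 1) * (m * N + c1) - e)
        * ℓ (tauM N q) := by
      simp only [hq', map_sub, map_add, map_mul, htC, ← MvPolynomial.smul_eq_C_mul, map_smul, smul_eq_mul, hl1, hl2]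
      rw [hk1, hk2]
      ring
    have h2 : (m * m * N + (N - 1) * (m * N) + c2 - (2 * m + N - 1) * (m * N + c1) : ℂ)
        = evE N m (rhoE N m) := by
      have hs : c1 * 2 = N * (N - 1) := by
        have h := Finset.sum_range_id_mul_two N
        rw [hc1, Fin.sum_univ_eq_sum_range (fun i => (i : ℂ))]
        rcases Nat.eq_zero_or_pos N with h0 | h0
        · subst h0; simp
        · have := congrArg (Nat.cast (R := ℂ)) h
          push_cast [Nat.cast_sub h0] at this
          exact this
      simp only [evE, rhoE_apply, Nat.cast_add, add_sq, Finset.sum_add_distrib, ← Finset.mul_sum,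
        ← hc1, ← hc2]
      simp
      linear_combination (-(m : ℂ)) * hs
    rw [h1, h2] at h0
    exact (mul_eq_zero.1 h0).resolve_left (sub_ne_zero.2 (he e (Finset.mem_insert_self _ _)).symm)

lemma evE_ne (m : ℕ) (q : SS) (h0 : coeff (rhoE N m) (sigA N q * vdm N) = 0) (α : Fin N →₀ ℕ)
    (hα : coeff α (sigA N q * vdm N) ≠ 0) : evE N m α ≠ evE N m (rhoE N m) := by
  intro he
  have hinj : Function.Injective α := by
    intro i j hij
    by_contra hne
    have h1 := coeff_swap q (Equiv.swap i j) α
    have h2 : α.mapDomain (Equiv.swap i j) = α := by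
      ext x
      rw [Finsupp.mapDomain_equiv_apply, Equiv.symm_swap]
      by_cases hx : x = i
      · subst hx; simp [hij]
      · by_cases hx' : x = j
        · subst hx'; simp [hij]
        · rw [Equiv.swap_apply_of_ne_of_ne hx hx']
    rw [h2, Equiv.Perm.sign_swap hne] at h1
    apply hα
    push_cast at h1
    linear_combination h1 / 2
  obtain ⟨ϖ, hϖ⟩ := comb_core m α hinj (by
    have : ((∑ i, ((α i : ℤ) ^ 2 - (2 * m + N - 1) * α i) : ℤ) : ℂ) = ((∑ i : Fin N, (((m + i : ℕ) : ℤ) ^ 2 - (2 * m + N - 1) * ((m + i : ℕ) : ℤ)) : ℤ) : ℂ) := by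
      simp only [evE, rhoE_apply] at he
      push_cast at he ⊢
      simp only [Finset.sum_sub_distrib, ← Finset.mul_sum]
      exact he
    exact_mod_cast this)
  have h1 : α = (rhoE N m).mapDomain ϖ.symm := by
    ext i
    rw [Finsupp.mapDomain_equiv_apply, rhoE_apply, hϖ]; simp
  rw [h1, coeff_swap, h0, mul_zero] at hα
  exact hα rfl

lemma coeff_rhoE_vdm : coeff (rhoE N 0) (vdm N) = 1 := by
  rw [vdm_expand, coeff_sum, Finset.sum_eq_single 1]
  · simp
  · intro ϖ _ hϖ
    rw [coeff_smul, coeff_monomial, if_neg, smul_zero]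
    intro h
    apply hϖ
    ext i
    have h1 := DFunLike.congr_fun h (ϖ i)
    rw [Finsupp.mapDomain_apply ϖ.injective, rhoE_apply, rhoE_apply] at h1
    simp at h1; simp [← h1]
  · simp

theorem functional_eq (m : ℕ) (ℓ : MvPolynomial (Fin N × Fin N) ℂ →ₗ[ℂ] ℂ)
    (hE : ∀ a b P, ℓ (dE a b P) = if a = b then m * ℓ P else 0)
    (hker : ∀ q : SS, sigA N q = 0 → ℓ (tauM N q) = 0)
    (qm : SS) (hqm : sigA N qm = ∏ i, X i ^ m) (q : SS) :
    ℓ (tauM N q) = coeff (rhoE N m) (sigA N q * vdm N) * ℓ (tauM N qm) := by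
  classical
  have hc : coeff (rhoE N m) (sigA N qm * vdm N) = 1 := by
    have h1 : (∏ i, X i ^ m : MvPolynomial (Fin N) ℂ) =
        monomial (Finsupp.equivFunOnFinite.symm (fun _ => m)) 1 := by
      rw [monomial_eq, Finsupp.prod_fintype _ _ (by simp)]
      simp
    have h2 : rhoE N m = Finsupp.equivFunOnFinite.symm (fun _ => m) + rhoE N 0 := by
      ext i; simp [rhoE_apply]
    rw [hqm, h1, h2, coeff_monomial_mul, coeff_rhoE_vdm, one_mul]
  set c := coeff (rhoE N m) (sigA N q * vdm N) with hcdef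
  have hsC : ∀ a : ℂ, sigA N (C a) = C a := fun a => by simp [sigA, ← algebraMap_eq]
  have htC : ∀ a : ℂ, tauM N (C a) = C a := fun a => by simp [tauM, ← algebraMap_eq]
  have h0 : coeff (rhoE N m) (sigA N (q - C c * qm) * vdm N) = 0 := by
    rw [map_sub, map_mul, hsC, sub_mul, coeff_sub, mul_assoc, coeff_C_mul, hc, ← hcdef]; ring
  have := functional_spectral m ℓ hE hker
    ((sigA N (q - C c * qm) * vdm N).support.image (evE N m)) (by
      intro e he
      obtain ⟨α, hα, rfl⟩ := Finset.mem_image.1 he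
      exact evE_ne m _ h0 α (mem_support_iff.1 hα)) (q - C c * qm) (by
      intro α hα
      exact Finset.mem_image_of_mem _ (mem_support_iff.2 hα))
  rw [map_sub, map_mul, htC, map_sub, ← MvPolynomial.smul_eq_C_mul, map_smul, sub_eq_zero] at this
  exact this

end Functional
end KolmHaar

namespace KolmHaar
open MvPolynomial Matrix Finset

section Eig
variable {N : ℕ}

/-- evaluation at a matrix -/
noncomputable def evM (A : Matrix (Fin N) (Fin N) ℂ) : MvPolynomial (Fin N × Fin N) ℂ →ₐ[ℂ] ℂ :=
  aeval (fun p => A p.1 p.2)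

lemma gen_map (A : Matrix (Fin N) (Fin N) ℂ) : (gen N).map (evM A) = A := by
  ext i j; simp [evM]

lemma evM_pM (A : Matrix (Fin N) (Fin N) ℂ) (k : ℕ) : evM A (pM N k) = trace (A ^ k) := by
  have h1 : evM A (pM N k) = trace ((gen N ^ k).map (evM A)) := by
    simp [pM, trace, map_sum]
  have h2 : (gen N ^ k).map (evM A) = A ^ k := by
    have := map_pow ((evM A).toRingHom.mapMatrix) (gen N) k
    have h3 : (evM A).toRingHom.mapMatrix (gen N) = A := gen_map A
    rw [h3] at this
    exact this
  rw [h1, h2]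

lemma card_roots (A : Matrix (Fin N) (Fin N) ℂ) : Multiset.card A.charpoly.roots = N := by
  rw [(Polynomial.splits_iff_card_roots.1 (IsAlgClosed.splits A.charpoly)), charpoly_natDegree_eq_dim]
  simp

lemma exists_z (A : Matrix (Fin N) (Fin N) ℂ) : ∃ z : Fin N → ℂ, univ.val.map z = A.charpoly.roots := by
  obtain ⟨l, hl⟩ := Quot.exists_rep A.charpoly.roots
  have hl' : (l : Multiset ℂ) = A.charpoly.roots := hl
  have hlen : l.length = N := by rw [← card_roots A, ← hl']; rfl
  subst hlen
  refine ⟨fun i => l.get i, ?_⟩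
  rw [← hl', Fin.univ_val_map]
  simp

/-- eigenvalue vector -/
noncomputable def zv (A : Matrix (Fin N) (Fin N) ℂ) : Fin N → ℂ := (exists_z A).choose

lemma zv_spec (A : Matrix (Fin N) (Fin N) ℂ) : univ.val.map (zv A) = A.charpoly.roots :=
  (exists_z A).choose_spec

lemma charpoly_eq (A : Matrix (Fin N) (Fin N) ℂ) :
    A.charpoly = ∏ i, (Polynomial.X - Polynomial.C (zv A i)) := by
  have h := (IsAlgClosed.splits A.charpoly).eq_prod_roots_of_monic (charpoly_monic A)
  rw [h, ← zv_spec, Multiset.map_map]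
  rfl

lemma det_sub_scalar (A : Matrix (Fin N) (Fin N) ℂ) (a : ℂ) :
    (A - algebraMap ℂ _ a).det = ∏ i, (zv A i - a) := by
  have h1 : (A - algebraMap ℂ _ a) = - (scalar (Fin N) a - A) := by
    simp [Matrix.algebraMap_eq_diagonal, scalar_apply]
  rw [h1, det_neg, ← eval_charpoly, charpoly_eq, Polynomial.eval_prod]
  simp only [Polynomial.eval_sub, Polynomial.eval_X, Polynomial.eval_C, Fintype.card_fin]
  have : ∀ i, zv A i - a = (-1) * (a - zv A i) := fun i => by ring
  simp only [this, Finset.prod_mul_distrib, Finset.prod_const]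
  simp

lemma det_aeval (A : Matrix (Fin N) (Fin N) ℂ) (p : Polynomial ℂ) :
    (Polynomial.aeval A p).det = ∏ i, p.eval (zv A i) := by
  have h := (IsAlgClosed.splits p).eq_prod_roots
  obtain ⟨c, s, hp⟩ : ∃ (c : ℂ) (s : Multiset ℂ),
    p = Polynomial.C c * (s.map (fun a => Polynomial.X - Polynomial.C a)).prod := ⟨_, _, h⟩
  clear h
  subst hp
  induction s using Multiset.induction_on with
  | empty =>
    simp [Matrix.algebraMap_eq_diagonal, Pi.algebraMap_def]
  | cons a s ih =>
    have : Polynomial.C c * (Multiset.map (fun a => Polynomial.X - Polynomial.C a) (a ::ₘ s)).prod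
      = (Polynomial.X - Polynomial.C a) * (Polynomial.C c * (Multiset.map (fun a => Polynomial.X - Polynomial.C a) s).prod) := by
      rw [Multiset.map_cons, Multiset.prod_cons]; ring
    rw [this, map_mul, det_mul, ih, map_sub, Polynomial.aeval_X, Polynomial.aeval_C, det_sub_scalar]
    simp only [Polynomial.eval_mul (p := _ - _), Finset.prod_mul_distrib]
    simp

lemma trace_pow_eq (A : Matrix (Fin N) (Fin N) ℂ) (k : ℕ) : trace (A ^ k) = ∑ i, zv A i ^ k := by
  have h : (A ^ k).charpoly = ∏ i, (Polynomial.X - Polynomial.C (zv A i ^ k)) := by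
    refine Polynomial.funext fun x => ?_
    rw [eval_charpoly]
    have := det_aeval A (Polynomial.C x - Polynomial.X ^ k)
    simp only [map_sub, map_pow, Polynomial.aeval_X, Polynomial.aeval_C] at this
    rw [Polynomial.eval_prod]
    simp only [Polynomial.eval_sub, Polynomial.eval_X, Polynomial.eval_C, Polynomial.eval_pow] at this ⊢
    rw [← this]
    rfl
  rw [trace_eq_sum_roots_charpoly, h]
  have h2 : (∏ i, (Polynomial.X - Polynomial.C (zv A i ^ k))) =
      ((univ.val.map (fun i => zv A i ^ k)).map (fun a => Polynomial.X - Polynomial.C a)).prod := by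
    rw [Multiset.map_map]; rfl
  rw [h2, Polynomial.roots_multiset_prod_X_sub_C]
  rfl

lemma evM_tauM (A : Matrix (Fin N) (Fin N) ℂ) (q : SS) :
    evM A (tauM N q) = aeval (zv A) (sigA N q) := by
  have : (evM A).comp (tauM N) = (aeval (zv A)).comp (sigA N) := by
    refine MvPolynomial.algHom_ext fun k => ?_
    rw [AlgHom.comp_apply, AlgHom.comp_apply, tauM_X, sigA_X, evM_pM, trace_pow_eq]
    simp [pA, psum]
  exact DFunLike.congr_fun this q

lemma det_eq_zv (A : Matrix (Fin N) (Fin N) ℂ) : A.det = ∏ i, zv A i := by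
  rw [det_eq_prod_roots_charpoly, ← zv_spec]; rfl

/-- every symmetric polynomial is in the range of sigA -/
lemma sigA_surj (f : MvPolynomial (Fin N) ℂ) (hf : f.IsSymmetric) : ∃ q, sigA N q = f := by
  have he : ∀ k, esymm (Fin N) ℂ k ∈ (sigA N).range := by
    intro k
    induction k using Nat.strong_induction_on with
    | _ k ih =>
      rcases Nat.eq_zero_or_pos k with h0 | h0
      · subst h0; rw [esymm_zero]; exact one_mem _
      · have h := mul_esymm_eq_sum (Fin N) ℂ k
        have h2 : esymm (Fin N) ℂ k = ((k : ℂ)⁻¹) • ((-1) ^ (k + 1) *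
            ∑ a ∈ antidiagonal k with a.1 < k, (-1) ^ a.1 * esymm (Fin N) ℂ a.1 * psum (Fin N) ℂ a.2) := by
          rw [← h, MvPolynomial.smul_eq_C_mul, ← mul_assoc]
          have : (k : MvPolynomial (Fin N) ℂ) = C (k : ℂ) := by simp
          rw [this, ← C_mul, inv_mul_cancel₀ (by exact_mod_cast h0.ne')]
          simp
        rw [h2]
        have hm1 : (-1 : MvPolynomial (Fin N) ℂ) ∈ (sigA N).range := neg_mem (one_mem _)
        refine Subalgebra.smul_mem _ (mul_mem (pow_mem hm1 _) (sum_mem fun a ha => ?_)) _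
        refine mul_mem (mul_mem (pow_mem hm1 _) (ih _ (Finset.mem_filter.1 ha).2)) ⟨X a.2, ?_⟩
        exact sigA_X _
  obtain ⟨q, hq⟩ := esymmAlgHom_surjective (σ := Fin N) (R := ℂ) (n := N) (by simp) ⟨f, hf⟩
  have h3 : f = aeval (fun i : Fin N => esymm (Fin N) ℂ (i + 1)) q := by
    rw [← esymmAlgHom_apply, hq]
  have h4 : ∀ q : MvPolynomial (Fin N) ℂ,
      aeval (fun i : Fin N => esymm (Fin N) ℂ (i + 1)) q ∈ (sigA N).range := by
    intro q
    induction q using MvPolynomial.induction_on with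
    | C a => rw [aeval_C]; exact Subalgebra.algebraMap_mem _ _
    | add p q hp hq => rw [map_add]; exact add_mem hp hq
    | mul_X p i hp => rw [map_mul, aeval_X]; exact mul_mem hp (he _)
  rw [h3]
  exact h4 q
end Eig
end KolmHaar

namespace KolmHaar
open MvPolynomial Matrix Finset

section Haar
variable {N : ℕ}

abbrev UG (N : ℕ) := Matrix.unitaryGroup (Fin N) ℂ

instance : CompactSpace (UG N) := by
  have h : IsCompact ((Matrix.unitaryGroup (Fin N) ℂ : Submonoid _) : Set (Matrix (Fin N) (Fin N) ℂ)) := by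
    have hc : IsCompact (Set.univ.pi (fun _ : Fin N => Set.univ.pi (fun _ : Fin N => Metric.closedBall (0 : ℂ) 1))) :=
      isCompact_univ_pi fun _ => isCompact_univ_pi fun _ => isCompact_closedBall 0 1
    refine hc.of_isClosed_subset ?_ ?_
    · have : ((Matrix.unitaryGroup (Fin N) ℂ : Submonoid _) : Set (Matrix (Fin N) (Fin N) ℂ))
          = {A | A * star A = 1} := by
        ext A; exact Matrix.mem_unitaryGroup_iff
      rw [this]
      exact isClosed_eq (by fun_prop) (by fun_prop)
    · intro A hA i _ j _
      simpa using entry_norm_bound_of_unitary hA i j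
  exact isCompact_iff_compactSpace.1 h

lemma integrable_cont {ℙ : Measure (UG N)} [IsProbabilityMeasure ℙ] {f : UG N → ℂ} (hf : Continuous f) :
    Integrable f ℙ := hf.integrable_of_hasCompactSupport (HasCompactSupport.of_compactSpace f)

lemma cont_entry (i j : Fin N) : Continuous fun U : UG N => U.1 i j :=
  continuous_subtype_val.matrix_elem i j

lemma cont_evM (P : MvPolynomial (Fin N × Fin N) ℂ) : Continuous fun U : UG N => evM U.1 P := by
  induction P using MvPolynomial.induction_on with
  | C a => simp only [evM, aeval_C]; fun_prop
  | add p q hp hq => simp only [map_add]; exact hp.add hq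
  | mul_X p i hp =>
    have : ∀ U : UG N, evM U.1 (p * X i) = evM U.1 p * U.1 i.1 i.2 := fun U => by simp [evM]
    simp only [this]; exact hp.mul (cont_entry _ _)

lemma cont_det : Continuous fun U : UG N => star (U.1.det) := by fun_prop

noncomputable def hl (ℙ : Measure (UG N)) [IsProbabilityMeasure ℙ] (m : ℕ) :
    MvPolynomial (Fin N × Fin N) ℂ →ₗ[ℂ] ℂ where
  toFun P := ∫ U, star (U.1.det) ^ m * evM U.1 P ∂ℙ
  map_add' P Q := by
    have h : ∀ P, Integrable (fun U : UG N => star (U.1.det) ^ m * evM U.1 P) ℙ :=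
      fun P => integrable_cont ((cont_det.pow m).mul (cont_evM P))
    rw [← integral_add (h P) (h Q)]
    simp only [map_add, mul_add]
  map_smul' c P := by
    simp only [map_smul, smul_eq_mul, RingHom.id_apply]
    rw [← integral_const_mul]
    congr 1; ext U; ring

lemma hl_apply (ℙ : Measure (UG N)) [IsProbabilityMeasure ℙ] (m : ℕ) (P) :
  hl ℙ m P = ∫ U, star (U.1.det) ^ m * evM U.1 P ∂ℙ := rfl

/-- polynomial curve -/
noncomputable def phi (Q U : Matrix (Fin N) (Fin N) ℂ) :
    MvPolynomial (Fin N × Fin N) ℂ →ₐ[ℂ] Polynomial ℂ :=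
  aeval (fun p => Polynomial.C (U p.1 p.2 - (Q * U) p.1 p.2) + Polynomial.X * Polynomial.C ((Q * U) p.1 p.2))

lemma phi_eval (Q U : Matrix (Fin N) (Fin N) ℂ) (s : ℂ) (P) :
    (phi Q U P).eval s = evM ((1 + (s - 1) • Q) * U) P := by
  have : (Polynomial.aeval s).comp (phi Q U) = evM ((1 + (s - 1) • Q) * U) := by
    refine MvPolynomial.algHom_ext fun p => ?_
    simp [phi, evM, add_mul]
    ring
  exact DFunLike.congr_fun this P

lemma phi_deriv (Q U : Matrix (Fin N) (Fin N) ℂ) (P) :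
    (phi Q U P).derivative.eval 1 = ∑ a, ∑ b, Q a b * evM U (dE a b P) := by
  induction P using MvPolynomial.induction_on with
  | C a => simp [phi, ← algebraMap_eq]
  | add p q hp hq =>
    simp only [map_add, Polynomial.eval_add, hp, hq, mul_add, Finset.sum_add_distrib]
  | mul_X p i hp =>
    have h1 : ∀ a b, dE a b (X i : MvPolynomial (Fin N × Fin N) ℂ) =
        (single a b (1 : MvPolynomial (Fin N × Fin N) ℂ) * gen N : Matrix _ _ _) i.1 i.2 := by
      intro a b
      rw [← dE_gen]; simp
    have h2 : ∀ a b, evM U (dE a b (X i : MvPolynomial (Fin N × Fin N) ℂ)) = if a = i.1 then U b i.2 else 0 := by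
      intro a b
      rw [h1]
      by_cases h : a = i.1
      · subst h; simp [evM]
      · rw [if_neg h, Matrix.single_mul_apply_of_ne _ _ _ _ _ (Ne.symm h), map_zero]
    have h3 : (phi Q U p).eval 1 = evM U p := by rw [phi_eval]; simp
    have h4 : evM U (X i) = U i.1 i.2 := by simp [evM]
    simp only [map_mul, Polynomial.derivative_mul, Polynomial.eval_add, Polynomial.eval_mul, hp, h3,
      Derivation.leibniz, smul_eq_mul, map_add, h2, h4, mul_add, Finset.sum_add_distrib]
    have h5 : ∑ a, ∑ b, Q a b * (evM U p * if a = i.1 then U b i.2 else 0) = evM U p * (Q * U) i.1 i.2 := by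
      rw [Finset.sum_eq_single i.1]
      · simp only [if_true, mul_apply, Finset.mul_sum]
        refine Finset.sum_congr rfl fun _ _ => by ring
      · intro b _ hb; simp [hb]
      · simp
    have h6 : (phi Q U (X i)) = Polynomial.C (U i.1 i.2 - (Q * U) i.1 i.2) + Polynomial.X * Polynomial.C ((Q * U) i.1 i.2) := by
      simp [phi]
    rw [h5, h6]
    simp only [Polynomial.derivative_add, Polynomial.derivative_C, Polynomial.derivative_mul, Polynomial.derivative_X,
      Polynomial.eval_add, Polynomial.eval_C, Polynomial.eval_mul, Polynomial.eval_X]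
    simp only [Finset.sum_mul]
    simp
    rw [add_comm]
    congr 1
    refine Finset.sum_congr rfl fun _ _ => Finset.sum_congr rfl fun _ _ => by ring

lemma phi_deg (Q : Matrix (Fin N) (Fin N) ℂ) (P) : ∃ d, ∀ U, (phi Q U P).natDegree < d := by
  induction P using MvPolynomial.induction_on with
  | C a => exact ⟨1, fun U => by simp [phi]⟩
  | add p q hp hq =>
    obtain ⟨d, hd⟩ := hp
    obtain ⟨e, he⟩ := hq
    refine ⟨max d e, fun U => ?_⟩
    rw [map_add]
    refine (Polynomial.natDegree_add_le _ _).trans_lt ?_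
    have := hd U
    have := he U
    omega
  | mul_X p i hp =>
    obtain ⟨d, hd⟩ := hp
    refine ⟨d + 1, fun U => ?_⟩
    have h6 : (phi Q U (X i)) = Polynomial.C (U i.1 i.2 - (Q * U) i.1 i.2) + Polynomial.X * Polynomial.C ((Q * U) i.1 i.2) := by
      simp [phi]
    rw [map_mul, h6]
    refine Polynomial.natDegree_mul_le.trans_lt ?_
    have h1 := hd U
    have : (Polynomial.C (U i.1 i.2 - (Q * U) i.1 i.2) + Polynomial.X * Polynomial.C ((Q * U) i.1 i.2)).natDegree ≤ 1 := by
      compute_degree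
    omega

lemma phi_cont (Q : Matrix (Fin N) (Fin N) ℂ) (P) (k : ℕ) :
    Continuous fun U : UG N => (phi Q U.1 P).coeff k := by
  induction P using MvPolynomial.induction_on generalizing k with
  | C a => simp [phi]; fun_prop
  | add p q hp hq => simp only [map_add, Polynomial.coeff_add]; exact (hp k).add (hq k)
  | mul_X p i hp =>
    have h6 : ∀ U, (phi Q U (X i)) = Polynomial.C (U i.1 i.2 - (Q * U) i.1 i.2) + Polynomial.X * Polynomial.C ((Q * U) i.1 i.2) := by
      simp [phi]
    simp only [map_mul, h6, mul_add, Polynomial.coeff_add, Polynomial.coeff_mul_C, ← mul_assoc]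
    have hQ : Continuous fun U : UG N => (Q * U.1) i.1 i.2 := by fun_prop
    have hU : Continuous fun U : UG N => U.1 i.1 i.2 := cont_entry _ _
    refine ((hp k).mul (hU.sub hQ)).add (Continuous.mul ?_ hQ)
    cases k with
    | zero => simp; fun_prop
    | succ k => simp only [Polynomial.coeff_mul_X]; exact hp k

lemma sd_proj (ℙ : Measure (UG N)) [IsProbabilityMeasure ℙ] [ℙ.IsHaarMeasure] (m : ℕ)
    (Q : Matrix (Fin N) (Fin N) ℂ)
    (hQ : ∀ s : ℂ, ‖s‖ = 1 → (1 + (s - 1) • Q) ∈ Matrix.unitaryGroup (Fin N) ℂ ∧ (1 + (s - 1) • Q).det = s)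
    (P) : ∑ a, ∑ b, Q a b * hl ℙ m (dE a b P) = m * hl ℙ m P := by
  obtain ⟨d, hd⟩ := phi_deg Q P
  set c : ℕ → ℂ := fun k => ∫ U : UG N, star (U.1.det) ^ m * (phi Q U.1 P).coeff k ∂ℙ with hc
  have hitg : ∀ k, Integrable (fun U : UG N => star (U.1.det) ^ m * (phi Q U.1 P).coeff k) ℙ :=
    fun k => integrable_cont ((cont_det.pow m).mul (phi_cont Q P k))
  set q : Polynomial ℂ := ∑ k ∈ range d, Polynomial.C (c k) * Polynomial.X ^ k with hq
  have hqe : ∀ s : ℂ, q.eval s = ∫ U : UG N, star (U.1.det) ^ m * (phi Q U.1 P).eval s ∂ℙ := by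
    intro s
    have : ∀ U : UG N, star (U.1.det) ^ m * (phi Q U.1 P).eval s =
      ∑ k ∈ range d, (star (U.1.det) ^ m * (phi Q U.1 P).coeff k) * s ^ k := by
      intro U
      rw [Polynomial.eval_eq_sum_range' (hd U.1), Finset.mul_sum]
      simp only [mul_assoc]
    simp only [this]
    rw [integral_finsetSum _ (fun k _ => (hitg k).mul_const _)]
    simp only [integral_mul_const, hq, Polynomial.eval_finsetSum, Polynomial.eval_mul, Polynomial.eval_C,
      Polynomial.eval_pow, Polynomial.eval_X, hc]
  have hqd : q.derivative.eval 1 = ∑ a, ∑ b, Q a b * hl ℙ m (dE a b P) := by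
    have h1 : q.derivative.eval 1 = ∫ U : UG N, star (U.1.det) ^ m * (phi Q U.1 P).derivative.eval 1 ∂ℙ := by
      have : ∀ U : UG N, star (U.1.det) ^ m * (phi Q U.1 P).derivative.eval 1 =
        ∑ k ∈ range d, (star (U.1.det) ^ m * (phi Q U.1 P).coeff k) * k := by
        intro U
        conv_lhs => rw [Polynomial.as_sum_range' (phi Q U.1 P) d (hd U.1)]
        simp only [Polynomial.derivative_sum, Polynomial.derivative_monomial, Polynomial.eval_finsetSum,
          Polynomial.eval_monomial, one_pow, mul_one, Finset.mul_sum, mul_assoc]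
      simp only [this]
      rw [integral_finsetSum _ (fun k _ => (hitg k).mul_const _)]
      simp only [integral_mul_const, hq, Polynomial.derivative_sum, Polynomial.eval_finsetSum,
        Polynomial.derivative_C_mul_X_pow, Polynomial.eval_mul, Polynomial.eval_C,
        Polynomial.eval_pow, Polynomial.eval_X, one_pow, mul_one, hc]
    rw [h1]
    simp only [phi_deriv, Finset.mul_sum]
    have hi : ∀ a b, Integrable (fun U : UG N => star (U.1.det) ^ m * (Q a b * evM U.1 (dE a b P))) ℙ :=
      fun a b => integrable_cont ((cont_det.pow m).mul (continuous_const.mul (cont_evM _)))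
    rw [integral_finsetSum _ (fun a _ => integrable_finsetSum _ fun b _ => hi a b)]
    refine Finset.sum_congr rfl fun a _ => ?_
    rw [integral_finsetSum _ (fun b _ => hi a b)]
    refine Finset.sum_congr rfl fun b _ => ?_
    rw [hl_apply, ← integral_const_mul]
    congr 1; ext U; ring
  have hinv : ∀ s : ℂ, ‖s‖ = 1 → q.eval s = s ^ m * hl ℙ m P := by
    intro s hs
    obtain ⟨h1, h2⟩ := hQ s hs
    rw [hqe, hl_apply]
    set V : UG N := ⟨1 + (s - 1) • Q, h1⟩
    rw [← integral_mul_left_eq_self (fun U : UG N => star (U.1.det) ^ m * evM U.1 P) V, ← integral_const_mul]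
    congr 1; ext U
    have h3 : (V * U).1.det = s * U.1.det := by
      have : (V * U).1 = V.1 * U.1 := rfl
      rw [this, det_mul, h2]
    have h4 : s * star s = 1 := by
      have := Complex.mul_conj s
      rw [Complex.normSq_eq_norm_sq, hs] at this
      simpa using this
    rw [h3, phi_eval, star_mul, mul_pow, ← mul_assoc, ← mul_assoc]
    have h5 : s ^ m * star U.1.det ^ m * star s ^ m = star U.1.det ^ m := by
      rw [mul_right_comm, ← mul_pow, h4]; simp
    rw [h5]
    rfl
  have hqeq : q = Polynomial.C (hl ℙ m P) * Polynomial.X ^ m := by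
    refine Polynomial.eq_of_infinite_eval_eq _ _ (Set.Infinite.mono (s := {s : ℂ | ‖s‖ = 1}) ?_ ?_)
    · intro s hs
      simp [hinv s hs]; ring
    · have : {s : ℂ | ‖s‖ = 1} = Metric.sphere 0 1 := by ext; simp
      rw [this]
      have h := (isPreconnected_sphere (E := ℂ) (by simp) 0 1).infinite_of_nontrivial
      apply h
      refine ⟨1, by simp, -1, by simp, ?_⟩
      intro h
      have := congrArg Complex.re h
      norm_num at this
  rw [← hqd, hqeq, Polynomial.derivative_C_mul_X_pow]
  simp only [Polynomial.eval_mul, Polynomial.eval_C, Polynomial.eval_pow, Polynomial.eval_X, one_pow, mul_one]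
  ring

end Haar
end KolmHaar

namespace KolmHaar
open MvPolynomial Matrix Finset

section HaarE
variable {N : ℕ}

lemma sd_vec (ℙ : Measure (UG N)) [IsProbabilityMeasure ℙ] [ℙ.IsHaarMeasure] (m : ℕ)
    (c : ℂ) (hc : star c = c) (w : Fin N → ℂ) (hw : c * (star w ⬝ᵥ w) = 1) (P) :
    c * ∑ a, ∑ b, w a * star (w b) * hl ℙ m (dE a b P) = m * hl ℙ m P := by
  have h := sd_proj ℙ m (c • vecMulVec w (star w)) ?_ P
  · rw [← h, Finset.mul_sum]
    refine Finset.sum_congr rfl fun a _ => ?_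
    rw [Finset.mul_sum]
    refine Finset.sum_congr rfl fun b _ => ?_
    simp [vecMulVec_apply]; ring
  · intro s hs
    set Q := c • vecMulVec w (star w) with hQ
    have h1 : Q * Q = Q := by
      rw [hQ, smul_mul_smul_comm, vecMulVec_mul_vecMulVec, vecMulVec_smul, smul_smul,
        mul_assoc, hw, mul_one]
    have h2 : star Q = Q := by
      rw [hQ, star_smul, hc, star_eq_conjTranspose, conjTranspose_vecMulVec, star_star]
    have h4 : s * star s = 1 := by
      have := Complex.mul_conj s
      rw [Complex.normSq_eq_norm_sq, hs] at this
      simpa using this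
    constructor
    · rw [Matrix.mem_unitaryGroup_iff, star_add, star_smul, h2, star_one, add_mul, mul_add, mul_add,
        smul_mul_smul_comm, h1, one_mul, one_mul, mul_one, star_sub, star_one, add_assoc, ← add_smul, ← add_smul]
      rw [show star s - 1 + (s - 1 + (s - 1) * (star s - 1)) = 0 by linear_combination h4]
      simp
    · rw [hQ, smul_smul, ← smul_vecMulVec, vecMulVec_eq Unit,
        det_one_add_replicateCol_mul_replicateRow, dotProduct_smul, smul_eq_mul, mul_assoc, hw]
      ring

lemma hl_dE (ℙ : Measure (UG N)) [IsProbabilityMeasure ℙ] [ℙ.IsHaarMeasure] (m : ℕ) (a b : Fin N) (P) :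
    hl ℙ m (dE a b P) = if a = b then m * hl ℙ m P else 0 := by
  have hd : ∀ a, hl ℙ m (dE a a P) = m * hl ℙ m P := by
    intro a
    have := sd_vec ℙ m 1 (by simp) (Pi.single a 1) (by simp) P
    rw [← this, one_mul, Finset.sum_eq_single a, Finset.sum_eq_single a]
    · simp
    · intro b _ hb; simp [hb]
    · simp
    · intro b _ hb; simp [hb]
    · simp
  split_ifs with h
  · subst h; exact hd a
  · have key : ∀ ζ : ℂ, ζ * star ζ = 1 → star ζ * hl ℙ m (dE a b P) + ζ * hl ℙ m (dE b a P) = 0 := by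
      intro ζ hζ
      have hs : ∀ F : Fin N → ℂ, (∀ i, i ≠ a → i ≠ b → F i = 0) → ∑ i, F i = F a + F b := by
        intro F hF
        rw [← Finset.sum_pair h]
        symm
        refine Finset.sum_subset (Finset.subset_univ _) fun i _ hi => ?_
        simp at hi
        exact hF i hi.1 hi.2
      set w : Fin N → ℂ := fun i => if i = a then 1 else if i = b then ζ else 0 with hw
      have wa : w a = 1 := by simp [hw]
      have wb : w b = ζ := by simp [hw, Ne.symm h]
      have w0 : ∀ i, i ≠ a → i ≠ b → w i = 0 := fun i h1 h2 => by simp [hw, h1, h2]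
      have := sd_vec ℙ m (1/2) (by simp) w (by
        rw [dotProduct, hs]
        · simp only [Pi.star_apply, wa, wb, mul_comm (star ζ), hζ]; simp; norm_num
        · intro i h1 h2; simp [w0 i h1 h2]) P
      rw [hs, hs, hs, wa, wb, hd, hd] at this
      · simp only [star_one] at this
        linear_combination 2 * this - hζ * (m * hl ℙ m P)
      all_goals intro i h1 h2; simp [w0 i h1 h2]
    have k1 := key 1 (by simp)
    have k2 := key Complex.I (by simp)
    simp at k1 k2
    have : 2 * hl ℙ m (dE a b P) = 0 := by
      linear_combination k1 + Complex.I * k2 + (hl ℙ m (dE a b P) - hl ℙ m (dE b a P)) * Complex.I_sq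
    simpa using this

open scoped ComplexOrder in
lemma norm_zv (U : UG N) (i : Fin N) : ‖zv U.1 i‖ = 1 := by
  set z := zv U.1 i with hz
  have h1 : (U.1 - algebraMap ℂ _ z).det = 0 := by
    rw [det_sub_scalar]
    exact Finset.prod_eq_zero (Finset.mem_univ i) (sub_self _)
  obtain ⟨v, hv, hv2⟩ := exists_mulVec_eq_zero_iff.2 h1
  have h2 : U.1 *ᵥ v = z • v := by
    rw [sub_mulVec, sub_eq_zero, Algebra.algebraMap_eq_smul_one, smul_mulVec, one_mulVec] at hv2
    exact hv2
  have h3 : star (U.1 *ᵥ v) ⬝ᵥ (U.1 *ᵥ v) = star v ⬝ᵥ v := by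
    rw [star_mulVec, dotProduct_mulVec, vecMul_vecMul, ← star_eq_conjTranspose,
      (Matrix.mem_unitaryGroup_iff').1 U.2, vecMul_one]
  rw [h2, star_smul, smul_dotProduct, dotProduct_smul, smul_smul, smul_eq_mul] at h3
  have h4 : star v ⬝ᵥ v ≠ 0 := by
    rw [Ne, dotProduct_star_self_eq_zero (R := ℂ)]; exact hv
  have h5 : star z * z = 1 := mul_right_cancel₀ h4 (by rw [h3, one_mul])
  have h6 := congrArg norm h5
  rw [norm_mul, norm_star, norm_one] at h6
  nlinarith [norm_nonneg z]

lemma star_det (U : UG N) : star U.1.det * U.1.det = 1 := by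
  have h := (Matrix.mem_unitaryGroup_iff).1 U.2
  have := congrArg det h
  rw [det_mul, star_eq_conjTranspose, det_conjTranspose, det_one] at this
  rw [mul_comm]; exact this

/-- the Weyl integration formula, algebraic form -/
theorem weyl (ℙ : Measure (UG N)) [IsProbabilityMeasure ℙ] [ℙ.IsHaarMeasure] (m : ℕ)
    (f : MvPolynomial (Fin N) ℂ) (hf : f.IsSymmetric) :
    ∫ U : UG N, star (U.1.det) ^ m * aeval (zv U.1) f ∂ℙ = coeff (rhoE N m) (f * vdm N) := by
  obtain ⟨q, rfl⟩ := sigA_surj f hf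
  obtain ⟨qm, hqm⟩ := sigA_surj (N := N) (∏ i, X i ^ m) (by
    intro e
    rw [map_prod]
    simp only [map_pow, rename_X]
    exact Equiv.prod_comp e (fun i => (X i : MvPolynomial (Fin N) ℂ) ^ m))
  have h := functional_eq m (hl ℙ m) (hl_dE ℙ m) (by
    intro q hq
    rw [hl_apply]
    simp [evM_tauM, hq]) qm hqm q
  have h1 : hl ℙ m (tauM N qm) = 1 := by
    rw [hl_apply]
    have : ∀ U : UG N, star (U.1.det) ^ m * evM U.1 (tauM N qm) = 1 := by
      intro U
      rw [evM_tauM, hqm, map_prod]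
      simp only [map_pow, aeval_X]
      rw [Finset.prod_pow, ← det_eq_zv, ← mul_pow, star_det, one_pow]
    simp only [this]
    simp
  rw [h1, mul_one] at h
  rw [← h, hl_apply]
  simp only [evM_tauM]
end HaarE
end KolmHaar

namespace KolmHaar
open MvPolynomial Matrix Finset

section Toep
variable {N : ℕ}

lemma coeff_prod_aeval (α : Fin N →₀ ℕ) (p : Fin N → Polynomial ℂ) :
    coeff α (∏ i, Polynomial.aeval (X i : MvPolynomial (Fin N) ℂ) (p i)) = ∏ i, (p i).coeff (α i) := by
  classical
  obtain ⟨d, hd, hd2⟩ : ∃ d, (∀ i, (p i).natDegree < d) ∧ ∀ i, α i < d := by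
    refine ⟨∑ i, ((p i).natDegree + α i) + 1, fun i => ?_, fun i => ?_⟩
    · have := Finset.single_le_sum (f := fun i => (p i).natDegree + α i) (fun _ _ => Nat.zero_le _) (Finset.mem_univ i)
      omega
    · have := Finset.single_le_sum (f := fun i => (p i).natDegree + α i) (fun _ _ => Nat.zero_le _) (Finset.mem_univ i)
      omega
  have h : ∀ i, Polynomial.aeval (X i : MvPolynomial (Fin N) ℂ) (p i)
      = ∑ k ∈ range d, C ((p i).coeff k) * X i ^ k := by
    intro i
    rw [Polynomial.aeval_eq_sum_range' (hd i)]
    simp [MvPolynomial.smul_eq_C_mul]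
  simp only [h]
  rw [Finset.prod_univ_sum, coeff_sum]
  have h2 : ∀ φ : Fin N → ℕ, (∏ i, C ((p i).coeff (φ i)) * X i ^ (φ i) : MvPolynomial (Fin N) ℂ) =
      monomial (Finsupp.equivFunOnFinite.symm φ) (∏ i, (p i).coeff (φ i)) := by
    intro φ
    rw [monomial_eq, Finsupp.prod_fintype _ _ (by simp), Finset.prod_mul_distrib, map_prod]
    simp
  simp only [h2, coeff_monomial]
  rw [Finset.sum_eq_single (fun i => α i)]
  · rw [if_pos]; ext i; simp
  · intro φ _ hφ
    rw [if_neg]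
    intro h; apply hφ; ext i
    rw [← h]; rfl
  · intro h
    exfalso; apply h
    simp [hd2]

lemma heine_coeff (m : ℕ) (g : Polynomial ℂ) :
    coeff (rhoE N m) ((∏ i, Polynomial.aeval (X i : MvPolynomial (Fin N) ℂ) g) * vdm N) =
      Matrix.det (Matrix.of fun i j : Fin N => (Polynomial.X ^ (j : ℕ) * g).coeff (m + i)) := by
  rw [vdm, ← det_transpose, det_apply, det_apply', Finset.mul_sum, coeff_sum]
  rw [← Equiv.sum_comp (Equiv.inv (Equiv.Perm (Fin N)))]
  refine Finset.sum_congr rfl fun σ _ => ?_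
  have h1 : (∏ i, Polynomial.aeval (X i : MvPolynomial (Fin N) ℂ) g) *
      ∏ i, (vandermonde (fun i : Fin N => (X i : MvPolynomial (Fin N) ℂ)))ᵀ (σ⁻¹ i) i
      = ∏ i, Polynomial.aeval (X i : MvPolynomial (Fin N) ℂ) (Polynomial.X ^ ((σ⁻¹ i : Fin N) : ℕ) * g) := by
    rw [← Finset.prod_mul_distrib]
    refine Finset.prod_congr rfl fun i _ => ?_
    simp [vandermonde_apply]; ring
  have h2 : ∏ i, (Polynomial.X ^ ((σ⁻¹ i : Fin N) : ℕ) * g).coeff (rhoE N m i)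
     = ∏ i, (Matrix.of fun i j : Fin N => (Polynomial.X ^ (j : ℕ) * g).coeff (m + i)) (σ i) i := by
    rw [← Equiv.prod_comp σ]
    simp [rhoE_apply]
  simp only [Equiv.inv_apply, Equiv.Perm.sign_inv]
  rcases Int.units_eq_one_or (Equiv.Perm.sign σ) with h | h
  · rw [h, one_smul, h1, coeff_prod_aeval, h2]; simp
  · rw [h, Units.neg_smul, one_smul, mul_neg, h1, coeff_neg, coeff_prod_aeval, h2]; simp

/-- Circle of length 2π -/
abbrev Cir := AddCircle (2 * π)

instance : Fact (0 < 2 * π) := ⟨by positivity⟩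

/-- angle of a complex number -/
noncomputable def ang (z : ℂ) : Cir := ((Complex.arg z : ℝ) : Cir)

lemma fourier_ang (z : ℂ) (hz : ‖z‖ = 1) (n : ℤ) : fourier n (ang z) = z ^ n := by
  rw [ang, fourier_coe_apply]
  have h1 : z = Complex.exp (Complex.arg z * Complex.I) := by
    have := Complex.norm_mul_exp_arg_mul_I z
    rw [hz] at this; simpa using this.symm
  conv_rhs => rw [h1]
  rw [← Complex.exp_int_mul]
  congr 1
  have : (π : ℂ) ≠ 0 := by exact_mod_cast Real.pi_ne_zero
  push_cast
  field_simp

lemma integral_fourier (n k : ℤ) : ∫ t : Cir, fourier (-k) t * fourier n t ∂AddCircle.haarAddCircle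
    = if k = n then 1 else 0 := by
  have := (orthonormal_iff_ite.1 (orthonormal_fourier (T := 2 * π))) k n
  rw [fourierLp, fourierLp, ContinuousMap.inner_toLp] at this
  rw [← this]
  congr 1; ext t
  rw [fourier_neg]
  ring

/-- the symbol matrix -/
noncomputable def toep (N : ℕ) (F : Cir → ℂ) : Matrix (Fin N) (Fin N) ℂ :=
  Matrix.of fun i j => fourierCoeff F ((i : ℤ) - (j : ℤ))

def Good (ℙ : Measure (UG N)) (F : Cir → ℂ) : Prop :=
  Measurable (fun U : UG N => ∏ i, F (ang (zv U.1 i))) ∧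
    ∫ U : UG N, ∏ i, F (ang (zv U.1 i)) ∂ℙ = (toep N F).det

lemma good_laurent (ℙ : Measure (UG N)) [IsProbabilityMeasure ℙ] [ℙ.IsHaarMeasure] (c : ℤ →₀ ℂ) :
    Good ℙ (fun x => c.sum fun n a => a * fourier n x) := by
  classical
  obtain ⟨m, hm⟩ : ∃ m : ℕ, ∀ n ∈ c.support, n.natAbs ≤ m :=
    ⟨∑ n ∈ c.support, n.natAbs, fun n hn => Finset.single_le_sum (f := fun n : ℤ => n.natAbs) (fun _ _ => Nat.zero_le _) hn⟩
  set g : Polynomial ℂ := c.sum fun n a => Polynomial.C a * Polynomial.X ^ (n + m).toNat with hg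
  have hgc : ∀ k : ℕ, g.coeff k = c (k - m) := by
    intro k
    rw [hg, Finsupp.sum, Polynomial.finsetSum_coeff, Finset.sum_eq_single ((k : ℤ) - m)]
    · simp
    · intro n hn hne
      rw [Polynomial.coeff_C_mul_X_pow, if_neg]
      have := hm n hn
      omega
    · intro h
      rw [Finsupp.notMem_support_iff.1 h]; simp
  have hF : ∀ z : ℂ, ‖z‖ = 1 → (c.sum fun n a => a * fourier n (ang z)) = (star z) ^ m * g.eval z := by
    intro z hz
    have hz0 : z ≠ 0 := by intro h; simp [h] at hz
    have h4 : star z = z⁻¹ := by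
      have := Complex.mul_conj z
      rw [Complex.normSq_eq_norm_sq, hz] at this
      exact eq_inv_of_mul_eq_one_right (by simpa using this)
    rw [hg, Finsupp.sum, Finsupp.sum, Polynomial.eval_finsetSum, Finset.mul_sum]
    refine Finset.sum_congr rfl fun n hn => ?_
    have := hm n hn
    rw [fourier_ang z hz, h4]
    simp only [Polynomial.eval_mul, Polynomial.eval_C, Polynomial.eval_pow, Polynomial.eval_X]
    rw [← zpow_natCast z, Int.toNat_of_nonneg (by omega), zpow_add₀ hz0, inv_pow, zpow_natCast]
    field_simp
  have hprod : ∀ U : UG N, ∏ i, (c.sum fun n a => a * fourier n (ang (zv U.1 i))) =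
      star (U.1.det) ^ m * aeval (zv U.1) (∏ i, Polynomial.aeval (X i : MvPolynomial (Fin N) ℂ) g) := by
    intro U
    rw [det_eq_zv, map_prod, star_prod, ← Finset.prod_pow, ← Finset.prod_mul_distrib]
    refine Finset.prod_congr rfl fun i _ => ?_
    rw [hF _ (norm_zv U i), ← Polynomial.aeval_algHom_apply, aeval_X, Polynomial.coe_aeval_eq_eval]
  have hsym : (∏ i, Polynomial.aeval (X i : MvPolynomial (Fin N) ℂ) g).IsSymmetric := by
    intro e
    rw [map_prod]
    have : ∀ i, rename e (Polynomial.aeval (X i : MvPolynomial (Fin N) ℂ) g) =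
        Polynomial.aeval (X (e i) : MvPolynomial (Fin N) ℂ) g := by
      intro i
      rw [← Polynomial.aeval_algHom_apply, rename_X]
    simp only [this]
    exact Equiv.prod_comp e (fun i => Polynomial.aeval (X i : MvPolynomial (Fin N) ℂ) g)
  constructor
  · simp only [hprod]
    obtain ⟨q, hq⟩ := sigA_surj _ hsym
    rw [← hq]
    simp only [← evM_tauM]
    exact ((cont_det.pow m).mul (cont_evM _)).measurable
  · simp only [hprod]
    rw [weyl ℙ m _ hsym, heine_coeff]
    congr 1
    ext i j
    simp only [of_apply, toep]
    have h1 : fourierCoeff (fun x : Cir => c.sum fun n a => a * fourier n x) ((i : ℤ) - j) = c ((i : ℤ) - j) := by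
      rw [fourierCoeff]
      simp only [Finsupp.sum, smul_eq_mul, Finset.mul_sum]
      rw [integral_finsetSum]
      · have : ∀ n : ℤ, ∫ t : Cir, fourier (-((i : ℤ) - j)) t * (c n * fourier n t) ∂AddCircle.haarAddCircle
            = c n * if (i : ℤ) - j = n then 1 else 0 := by
          intro n
          rw [← integral_fourier, ← integral_const_mul]
          congr 1; ext t; ring
        simp only [this]
        simp
        tauto
      · intro n _
        refine Continuous.integrable_of_hasCompactSupport (by fun_prop) (HasCompactSupport.of_compactSpace _)
    rw [h1, Polynomial.coeff_X_pow_mul']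
    split_ifs with hij
    · rw [hgc]; congr 1; push_cast [Nat.cast_sub hij]; ring
    · by_contra hne
      have := hm _ (Finsupp.mem_support_iff.2 (Ne.symm hne))
      omega

lemma good_limit (ℙ : Measure (UG N)) [IsProbabilityMeasure ℙ] (F : ℕ → Cir → ℂ) (G : Cir → ℂ) (B : ℝ)
    (hB : ∀ n x, ‖F n x‖ ≤ B) (hm : ∀ n, Measurable (F n)) (hlim : ∀ x, Tendsto (fun n => F n x) atTop (nhds (G x)))
    (hg : ∀ n, Good ℙ (F n)) : Good ℙ G := by
  have hB0 : 0 ≤ B := (norm_nonneg _).trans (hB 0 0)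
  have hl : ∀ U : UG N, Tendsto (fun n => ∏ i, F n (ang (zv U.1 i))) atTop (nhds (∏ i, G (ang (zv U.1 i)))) :=
    fun U => tendsto_finsetProd _ fun i _ => hlim _
  refine ⟨measurable_of_tendsto_metrizable (fun n => (hg n).1) (tendsto_pi_nhds.2 hl), ?_⟩
  have h1 : Tendsto (fun n => ∫ U : UG N, ∏ i, F n (ang (zv U.1 i)) ∂ℙ) atTop
      (nhds (∫ U : UG N, ∏ i, G (ang (zv U.1 i)) ∂ℙ)) := by
    refine tendsto_integral_of_dominated_convergence (fun _ => B ^ N) (fun n => (hg n).1.aestronglyMeasurable)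
      (integrable_const _) (fun n => ae_of_all _ fun U => ?_) (ae_of_all _ hl)
    rw [norm_prod]
    refine (Finset.prod_le_prod (fun _ _ => norm_nonneg _) fun i _ => hB n _).trans ?_
    simp
  have h2 : Tendsto (fun n => (toep N (F n)).det) atTop (nhds (toep N G).det) := by
    have hc : Continuous fun A : Matrix (Fin N) (Fin N) ℂ => A.det := by fun_prop
    refine (hc.tendsto _).comp (tendsto_pi_nhds.2 fun i => tendsto_pi_nhds.2 fun j => ?_)
    refine tendsto_integral_of_dominated_convergence (fun _ => B)
      (fun n => ((ContinuousMap.continuous _).measurable.mul (hm n)).aestronglyMeasurable)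
      (integrable_const _) (fun n => ae_of_all _ fun x => ?_) (ae_of_all _ fun x => (hlim x).const_smul _)
    rw [norm_smul]
    have : ‖fourier (-((i : ℤ) - j)) x‖ = 1 := Circle.norm_coe _
    rw [this, one_mul]; exact hB n x
  simp only [(hg _).2] at h1
  exact tendsto_nhds_unique h1 h2

lemma good_cont (ℙ : Measure (UG N)) [IsProbabilityMeasure ℙ] [ℙ.IsHaarMeasure] (f : C(Cir, ℂ)) : Good ℙ f := by
  have h : f ∈ (Submodule.span ℂ (Set.range (@fourier (2 * π)))).topologicalClosure := by
    rw [span_fourier_closure_eq_top]; trivial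
  rw [← SetLike.mem_coe, Submodule.topologicalClosure_coe, mem_closure_iff_seq_limit] at h
  obtain ⟨u, hu, hlim⟩ := h
  have hb := hlim.norm.isBoundedUnder_le.bddAbove_range
  obtain ⟨B, hB⟩ := hb
  refine good_limit ℙ (fun n => u n) f B (fun n x => ?_) (fun n => (u n).continuous.measurable) (fun x => ?_) (fun n => ?_)
  · exact ((u n).norm_coe_le_norm x).trans (hB ⟨n, rfl⟩)
  · exact (((continuous_eval_const x : Continuous fun f : C(Cir, ℂ) => f x)).tendsto f).comp hlim
  · obtain ⟨c, hc⟩ := Finsupp.mem_span_range_iff_exists_finsupp.1 (hu n)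
    have := good_laurent (N := N) ℙ c
    convert this using 1
    ext x
    rw [← hc]
    simp [Finsupp.sum]

lemma good_ind {ι : Type*} (s : Finset ι) (ℙ : Measure (UG N)) [IsProbabilityMeasure ℙ] [ℙ.IsHaarMeasure] (c : ι → ℂ)
    (K : ι → Set Cir) (hK : ∀ j, IsClosed (K j)) :
    Good ℙ (fun x => 1 + ∑ j ∈ s, c j * (K j).indicator 1 x) := by
  have hpos : ∀ n : ℕ, (0 : ℝ) < 1 / ((n : ℝ) + 1) := fun n => by positivity
  have hlim := fun j => thickenedIndicator_tendsto_indicator_closure hpos tendsto_one_div_add_atTop_nhds_zero_nat (K j)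
  have hcont : ∀ n, Continuous (fun x => 1 + ∑ j ∈ s, c j * (((thickenedIndicator (hpos n) (K j)) x : NNReal) : ℂ)) := by
    intro n
    refine continuous_const.add (continuous_finsetSum _ fun j _ => continuous_const.mul ?_)
    have : Continuous fun x => (thickenedIndicator (hpos n) (K j)) x := (thickenedIndicator (hpos n) (K j)).continuous
    exact Complex.continuous_ofReal.comp (NNReal.continuous_coe.comp this)
  refine good_limit ℙ (fun n x => 1 + ∑ j ∈ s, c j * (((thickenedIndicator (hpos n) (K j)) x : NNReal) : ℂ)) _
    (1 + ∑ j ∈ s, ‖c j‖) (fun n x => ?_) (fun n => (hcont n).measurable) (fun x => ?_) (fun n => good_cont ℙ ⟨_, hcont n⟩)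
  · refine (norm_add_le _ _).trans (add_le_add (by simp) ((norm_sum_le _ _).trans (Finset.sum_le_sum fun j _ => ?_)))
    rw [norm_mul]
    refine mul_le_of_le_one_right (norm_nonneg _) ?_
    have := thickenedIndicator_le_one (hpos n) (K j) x
    simpa using this
  · refine tendsto_const_nhds.add (tendsto_finsetSum _ fun j _ => Tendsto.const_mul _ ?_)
    have h1 := tendsto_pi_nhds.1 (hlim j) x
    rw [(hK j).closure_eq] at h1
    have h2 := ((Complex.continuous_ofReal.comp NNReal.continuous_coe).tendsto _).comp h1
    refine h2.congr' ?_ |>.trans ?_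
    · rfl
    · by_cases hx : x ∈ K j <;> simp [hx]
end Toep
end KolmHaar

namespace KolmHaar
open Matrix Finset

section Arcs
variable {N : ℕ}

/-- closed arc -/
def Karc (φ : ℝ) : Set Cir := (fun x : ℝ => (x : Cir)) '' Set.Icc 0 φ

lemma Karc_closed (φ : ℝ) : IsClosed (Karc φ) :=
  (isCompact_Icc.image (AddCircle.continuous_mk' _)).isClosed

lemma mem_Karc {φ x : ℝ} (h1 : φ < 2 * π) (hx : x ∈ Set.Ico 0 (2 * π)) :
    (x : Cir) ∈ Karc φ ↔ x ≤ φ := by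
  constructor
  · rintro ⟨y, hy, hxy⟩
    have := (AddCircle.coe_eq_coe_iff_of_mem_Ico (p := 2 * π) (a := 0) (x := y) (y := x)
      ⟨hy.1, by simpa using hy.2.trans_lt h1⟩ (by simpa using hx)).1 hxy
    rw [← this]; exact hy.2
  · intro h; exact ⟨x, ⟨hx.1, h⟩, rfl⟩

noncomputable def sh (z : ℂ) : ℝ := if 0 ≤ Complex.arg z then Complex.arg z else Complex.arg z + 2 * π

lemma sh_mem (z : ℂ) : sh z ∈ Set.Ico 0 (2 * π) := by
  have h1 := Complex.neg_pi_lt_arg z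
  have h2 := Complex.arg_le_pi z
  have h3 := Real.pi_pos
  unfold sh
  split_ifs with h
  · exact ⟨h, by linarith⟩
  · push Not at h; constructor <;> linarith

lemma sh_coe (z : ℂ) : (sh z : Cir) = ang z := by
  unfold sh ang
  split_ifs with h
  · rfl
  · rw [AddCircle.coe_add, AddCircle.coe_period, add_zero]

open Classical in
/-- number of eigenangles in a set -/
noncomputable def cnt (A : Set Cir) (U : UG N) : ℕ := #{i | ang (zv U.1 i) ∈ A}

lemma card_filter_aux (f : Fin N → ℝ) (p : ℝ → Prop) {_ : DecidablePred p} (q : Fin N → Prop) {_ : DecidablePred q}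
    (h : ∀ i, p (f i) ↔ q i) : Multiset.card (((univ : Finset (Fin N)).val.map f).filter p) = #{i | q i} := by
  rw [Multiset.filter_map, Multiset.card_map, Finset.card_def, Finset.filter_val]
  congr 1
  exact Multiset.filter_congr fun i _ => h i

lemma countFun_eq (U : UG N) {φ : ℝ} (h1 : φ < 2 * π) : countFun N U φ = cnt (Karc φ) U := by
  rw [countFun, countAngles, eigenAngles, ← zv_spec, Multiset.map_map, cnt]
  refine card_filter_aux _ _ _ fun i => ?_
  have h := sh_mem (zv U.1 i)
  rw [← sh_coe, mem_Karc h1 h]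
  change sh (zv U.1 i) ∈ Set.Icc 0 φ ↔ _
  exact ⟨fun h => h.2, fun h' => ⟨h.1, h'⟩⟩

/-- Fourier coefficients of arcs -/
noncomputable def kap (n : ℤ) (a b : ℝ) : ℂ := (1 / (2 * π) : ℝ) • ∫ x in a..b, Complex.exp (-(Complex.I * n * x))

noncomputable def Tm (N : ℕ) (a b : ℝ) : Matrix (Fin N) (Fin N) ℂ :=
  Matrix.of fun i j => kap ((i : ℤ) - (j : ℤ)) a b

lemma exp_ii (n : ℤ) (a b : ℝ) : IntervalIntegrable (fun x : ℝ => Complex.exp (-(Complex.I * n * x))) volume a b :=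
  (by fun_prop : Continuous _).intervalIntegrable _ _

lemma kap_add (n : ℤ) (a b c : ℝ) : kap n a b + kap n b c = kap n a c := by
  rw [kap, kap, kap, ← smul_add, intervalIntegral.integral_add_adjacent_intervals (exp_ii _ _ _) (exp_ii _ _ _)]

lemma Tm_add (a b c : ℝ) : Tm N a b + Tm N b c = Tm N a c := by
  ext i j; simp [Tm, kap_add]

lemma fourier_neg_eq (n : ℤ) (x : ℝ) : fourier (-n) (x : Cir) = Complex.exp (-(Complex.I * n * x)) := by
  rw [fourier_coe_apply]
  congr 1
  have : (π : ℂ) ≠ 0 := by exact_mod_cast Real.pi_ne_zero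
  push_cast
  field_simp

lemma kap_full (n : ℤ) : kap n 0 (2 * π) = if n = 0 then 1 else 0 := by
  have h := integral_fourier 0 n
  have h2 := fourierCoeff_eq_intervalIntegral (T := 2 * π) (fun _ => (1 : ℂ)) n 0
  rw [fourierCoeff] at h2
  simp only [fourier_zero, mul_one, smul_eq_mul] at h h2
  rw [h2, zero_add] at h
  rw [kap, ← h]
  simp only [fourier_neg_eq]

lemma Tm_full : Tm N 0 (2 * π) = 1 := by
  ext i j
  simp only [Tm, of_apply, kap_full, Matrix.one_apply, sub_eq_zero]
  congr 1
  simp [Fin.ext_iff]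

lemma kap_shift (n : ℤ) (a b h : ℝ) : kap n (a + h) (b + h) = Complex.exp (-(Complex.I * n * h)) * kap n a b := by
  rw [kap, kap, ← intervalIntegral.integral_comp_add_right, mul_smul_comm, ← intervalIntegral.integral_const_mul]
  congr 2; ext x
  rw [← Complex.exp_add]; congr 1; push_cast; ring

lemma fourierCoeff_Karc {ι : Type*} (s : Finset ι) (c : ι → ℂ) (φ : ι → ℝ) (h0 : ∀ j, 0 ≤ φ j)
    (h1 : ∀ j, φ j < 2 * π) (n : ℤ) :
    fourierCoeff (fun x : Cir => 1 + ∑ j ∈ s, c j * (Karc (φ j)).indicator 1 x) n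
      = (if n = 0 then 1 else 0) + ∑ j ∈ s, c j * kap n 0 (φ j) := by
  have hpi := Real.pi_pos
  rw [fourierCoeff_eq_intervalIntegral _ _ 0, zero_add]
  have e1 : ∫ x in (0 : ℝ)..(2 * π), fourier (-n) (x : Cir) • (1 + ∑ j ∈ s, c j * (Karc (φ j)).indicator 1 (x : Cir))
      = ∫ x in (0 : ℝ)..(2 * π), (Complex.exp (-(Complex.I * n * x)) +
        ∑ j ∈ s, c j * (Set.Iic (φ j)).indicator (fun x : ℝ => Complex.exp (-(Complex.I * n * x))) x) := by
    rw [intervalIntegral.integral_of_le (by positivity), intervalIntegral.integral_of_le (by positivity),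
      ← integral_Ico_eq_integral_Ioc, ← integral_Ico_eq_integral_Ioc]
    refine setIntegral_congr_fun measurableSet_Ico fun x hx => ?_
    simp only [fourier_neg_eq, smul_eq_mul, mul_add, mul_one, Finset.mul_sum]
    congr 1
    refine Finset.sum_congr rfl fun j _ => ?_
    by_cases h : x ≤ φ j
    · rw [Set.indicator_of_mem ((mem_Karc (h1 j) hx).2 h), Set.indicator_of_mem (by exact h)]; simp; ring
    · rw [Set.indicator_of_notMem (fun h' => h ((mem_Karc (h1 j) hx).1 h')), Set.indicator_of_notMem (by exact h)]; simp
  have hii : ∀ j, IntervalIntegrable (fun x : ℝ => c j * (Set.Iic (φ j)).indicator (fun x : ℝ => Complex.exp (-(Complex.I * n * x))) x) volume 0 (2 * π) := by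
    intro j
    rw [intervalIntegrable_iff_integrableOn_Ioc_of_le (by positivity)]
    refine Integrable.const_mul (Integrable.indicator ?_ measurableSet_Iic) _
    exact (intervalIntegrable_iff_integrableOn_Ioc_of_le (by positivity)).1 (exp_ii n 0 (2 * π))
  have hsum : IntervalIntegrable (fun x : ℝ => ∑ j ∈ s, c j * (Set.Iic (φ j)).indicator (fun x : ℝ => Complex.exp (-(Complex.I * n * x))) x) volume 0 (2 * π) := by
    have := IntervalIntegrable.sum s fun j _ => hii j
    rwa [show (∑ i ∈ s, fun x : ℝ => c i * (Set.Iic (φ i)).indicator (fun x : ℝ => Complex.exp (-(Complex.I * n * x))) x) = (fun x : ℝ => ∑ j ∈ s, c j * (Set.Iic (φ j)).indicator (fun x : ℝ => Complex.exp (-(Complex.I * n * x))) x) from by ext x; simp] at this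
  rw [e1, intervalIntegral.integral_add (exp_ii _ _ _) hsum,
    intervalIntegral.integral_finsetSum (fun j _ => hii j), smul_add, ← kap_full, Finset.smul_sum]
  congr 1
  refine Finset.sum_congr rfl fun j _ => ?_
  rw [intervalIntegral.integral_const_mul, ← mul_smul_comm, kap]
  congr 2
  rw [intervalIntegral.integral_of_le (by positivity), intervalIntegral.integral_of_le (h0 j),
    setIntegral_indicator measurableSet_Iic]
  congr 2
  ext x
  simp only [Set.mem_inter_iff, Set.mem_Ioc, Set.mem_Iic]
  constructor
  · rintro ⟨h2, h3⟩; exact ⟨h2.1, h3⟩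
  · rintro ⟨h2, h3⟩; exact ⟨⟨h2, h3.trans (h1 j).le⟩, h3⟩

lemma det_Karc {ι : Type*} (s : Finset ι) (ℙ : Measure (UG N)) [IsProbabilityMeasure ℙ] [ℙ.IsHaarMeasure]
    (c : ι → ℂ) (φ : ι → ℝ) (h0 : ∀ j, 0 ≤ φ j) (h1 : ∀ j, φ j < 2 * π) :
    Measurable (fun U : UG N => ∏ i, (1 + ∑ j ∈ s, c j * (Karc (φ j)).indicator 1 (ang (zv U.1 i)))) ∧
    ∫ U : UG N, ∏ i, (1 + ∑ j ∈ s, c j * (Karc (φ j)).indicator 1 (ang (zv U.1 i))) ∂ℙ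
      = (1 + ∑ j ∈ s, c j • Tm N 0 (φ j)).det := by
  obtain ⟨h2, h3⟩ := good_ind (N := N) s ℙ c (fun j => Karc (φ j)) (fun j => Karc_closed _)
  refine ⟨h2, ?_⟩
  rw [h3]
  congr 1
  ext i j
  simp only [toep, of_apply, fourierCoeff_Karc s c φ h0 h1, Matrix.add_apply, Matrix.sum_apply, Matrix.smul_apply,
    smul_eq_mul, Tm, Matrix.one_apply, sub_eq_zero]
  congr 1
  congr 1
  simp [Fin.ext_iff]

lemma prod_ind (A : Set Cir) (c : ℂ) (U : UG N) :
    ∏ i, (1 + c * A.indicator 1 (ang (zv U.1 i))) = (1 + c) ^ (cnt A U) := by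
  classical
  have : ∀ i, 1 + c * A.indicator 1 (ang (zv U.1 i)) = if ang (zv U.1 i) ∈ A then 1 + c else 1 := by
    intro i
    by_cases h : ang (zv U.1 i) ∈ A <;> simp [h]
  simp only [this]
  rw [Finset.prod_ite, Finset.prod_const, Finset.prod_const_one, mul_one, cnt]

/-- half open arc -/
def Jarc (a b : ℝ) : Set Cir := Karc b \ Karc a

lemma Karc_mono {a b : ℝ} (h : a ≤ b) : Karc a ⊆ Karc b := Set.image_mono (Set.Icc_subset_Icc_right h)

lemma ind_Jarc {a b : ℝ} (h : a ≤ b) (x : Cir) :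
    (Jarc a b).indicator (1 : Cir → ℂ) x = (Karc b).indicator 1 x - (Karc a).indicator 1 x := by
  have := @Karc_mono _ _ h x
  by_cases h1 : x ∈ Karc a
  · simp [Jarc, h1, this h1]
  · by_cases h2 : x ∈ Karc b <;> simp [Jarc, h1, h2]

lemma cnt_Jarc {a b : ℝ} (h : a ≤ b) (U : UG N) : cnt (Jarc a b) U + cnt (Karc a) U = cnt (Karc b) U := by
  classical
  unfold cnt
  rw [← Finset.card_union_of_disjoint]
  · congr 1
    ext i
    have := @Karc_mono _ _ h (ang (zv U.1 i))
    simp [Jarc]; tauto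
  · rw [Finset.disjoint_left]
    intro i hi
    simp [Jarc] at *
    tauto

lemma E_Karc (ℙ : Measure (UG N)) [IsProbabilityMeasure ℙ] [ℙ.IsHaarMeasure] (c : ℂ) {φ : ℝ} (h0 : 0 ≤ φ) (h1 : φ < 2 * π) :
    ∫ U : UG N, (1 + c) ^ (cnt (Karc φ) U) ∂ℙ = (1 + c • Tm N 0 φ).det := by
  have := (det_Karc ({0} : Finset (Fin 1)) ℙ (fun _ => c) (fun _ => φ) (fun _ => h0) (fun _ => h1)).2
  simp only [Finset.sum_singleton, prod_ind] at this
  exact this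

lemma meas_cnt_Karc (ℙ : Measure (UG N)) [IsProbabilityMeasure ℙ] [ℙ.IsHaarMeasure] {φ : ℝ} (h0 : 0 ≤ φ) (h1 : φ < 2 * π) :
    Measurable (fun U : UG N => cnt (Karc φ) U) := by
  have := (det_Karc ({0} : Finset (Fin 1)) ℙ (fun _ => 1) (fun _ => φ) (fun _ => h0) (fun _ => h1)).1
  simp only [Finset.sum_singleton, prod_ind] at this
  refine measurable_to_countable' fun k => ?_
  have h2 : (fun U : UG N => cnt (Karc φ) U) ⁻¹' {k} = (fun U : UG N => (1 + 1 : ℂ) ^ (cnt (Karc φ) U)) ⁻¹' {(1 + 1) ^ k} := by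
    ext U
    simp only [Set.mem_preimage, Set.mem_singleton_iff]
    refine ⟨fun h => by rw [h], fun h => ?_⟩
    have h3 : ((2 ^ (cnt (Karc φ) U) : ℕ) : ℂ) = ((2 ^ k : ℕ) : ℂ) := by push_cast; norm_num at h; exact h
    exact Nat.pow_right_injective le_rfl (by exact_mod_cast h3)
  rw [h2]
  exact this (measurableSet_singleton _)

lemma E_Jarc (ℙ : Measure (UG N)) [IsProbabilityMeasure ℙ] [ℙ.IsHaarMeasure] (c : ℂ) {a b : ℝ} (h0 : 0 ≤ a) (hab : a ≤ b)
    (h1 : b < 2 * π) :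
    ∫ U : UG N, (1 + c) ^ (cnt (Jarc a b) U) ∂ℙ = (1 + c • Tm N a b).det := by
  have := (det_Karc (Finset.univ : Finset (Fin 2)) ℙ ![c, -c] ![b, a] (by
    intro j; fin_cases j <;> simp <;> linarith) (by intro j; fin_cases j <;> simp <;> linarith)).2
  simp only [Fin.sum_univ_two] at this
  simp only [cons_val_zero, cons_val_one, neg_mul, neg_smul, ← sub_eq_add_neg, ← mul_sub, ← smul_sub, ← ind_Jarc hab, prod_ind] at this
  rw [this, ← Tm_add 0 a b, add_sub_cancel_left]

lemma E_Jarc2 (ℙ : Measure (UG N)) [IsProbabilityMeasure ℙ] [ℙ.IsHaarMeasure] {a b a' b' : ℝ} (h0 : 0 ≤ a) (hab : a ≤ b)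
    (hb : b ≤ a') (hab' : a' ≤ b') (h1 : b' < 2 * π) :
    ∫ U : UG N, (2 : ℂ) ^ (cnt (Jarc a b) U) * 2 ^ (cnt (Jarc a' b') U) ∂ℙ = (1 + Tm N a b + Tm N a' b').det := by
  have := (det_Karc (Finset.univ : Finset (Fin 4)) ℙ ![1, -1, 1, -1] ![b, a, b', a'] (by
    intro j; fin_cases j <;> simp <;> linarith) (by intro j; fin_cases j <;> simp <;> linarith)).2
  simp only [Fin.sum_univ_four] at this
  have e : (1 + (Tm N 0 b - Tm N 0 a + (Tm N 0 b' - Tm N 0 a'))) = 1 + Tm N a b + Tm N a' b' := by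
    rw [← Tm_add 0 a b, ← Tm_add 0 a' b']; abel
  have e2 : ∀ U : UG N, ∏ i, (1 + ((Jarc a b).indicator (1 : Cir → ℂ) (ang (zv U.1 i)) + (Jarc a' b').indicator 1 (ang (zv U.1 i))))
      = (2 : ℂ) ^ (cnt (Jarc a b) U) * 2 ^ (cnt (Jarc a' b') U) := by
    intro U
    have h := prod_ind (Jarc a b) 1 U
    have h' := prod_ind (Jarc a' b') 1 U
    norm_num at h h'
    rw [← h, ← h', ← Finset.prod_mul_distrib]
    refine Finset.prod_congr rfl fun i _ => ?_
    by_cases hx : ang (zv U.1 i) ∈ Jarc a b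
    · have : ang (zv U.1 i) ∉ Jarc a' b' := fun h2 => h2.2 (Karc_mono hb hx.1)
      simp [this]
    · simp [hx]
  rw [← e, ← integral_congr_ae (ae_of_all _ e2)]
  simp only [ind_Jarc hab, ind_Jarc hab']
  convert this using 3
  · refine Finset.prod_congr rfl fun i _ => ?_
    simp; ring
  · simp; abel
end Arcs
end KolmHaar

namespace KolmHaar
open Matrix Finset
open scoped ComplexOrder

section LA
variable {N : ℕ}

lemma spec_form {T : Matrix (Fin N) (Fin N) ℂ} (hT : T.IsHermitian) :
    ∃ V W : Matrix (Fin N) (Fin N) ℂ, W * V = 1 ∧ V * W = 1 ∧ W = Vᴴ ∧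
      T = V * diagonal (fun i => (hT.eigenvalues i : ℂ)) * W := by
  refine ⟨(hT.eigenvectorUnitary : Matrix (Fin N) (Fin N) ℂ), star (hT.eigenvectorUnitary : Matrix (Fin N) (Fin N) ℂ), ?_, ?_, rfl, ?_⟩
  · exact Unitary.coe_star_mul_self _
  · exact Unitary.coe_mul_star_self _
  · conv_lhs => rw [hT.spectral_theorem, Unitary.conjStarAlgAut_apply]
    rfl

lemma det_one_add_smul {T : Matrix (Fin N) (Fin N) ℂ} (hT : T.IsHermitian) (c : ℂ) :
    (1 + c • T).det = ∏ i, (1 + c * (hT.eigenvalues i : ℂ)) := by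
  obtain ⟨V, W, h1, h2, -, h3⟩ := spec_form hT
  have : 1 + c • T = V * (diagonal (fun i => 1 + c * (hT.eigenvalues i : ℂ)) * W) := by
    have e : diagonal (fun i => 1 + c * (hT.eigenvalues i : ℂ)) = 1 + c • diagonal (fun i => (hT.eigenvalues i : ℂ)) := by
      ext i j
      by_cases h : i = j <;> simp [diagonal, h]
    rw [e, Matrix.add_mul, Matrix.mul_add, Matrix.one_mul, h2, Matrix.smul_mul, Matrix.mul_smul, ← Matrix.mul_assoc, ← h3]
  rw [this, det_mul_comm, Matrix.mul_assoc, h1, Matrix.mul_one, det_diagonal]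

lemma trace_sq {T : Matrix (Fin N) (Fin N) ℂ} (hT : T.IsHermitian) :
    (T * T).trace = ∑ i, (hT.eigenvalues i : ℂ) ^ 2 := by
  obtain ⟨V, W, h1, h2, -, h3⟩ := spec_form hT
  set D := diagonal (fun i => (hT.eigenvalues i : ℂ)) with hD
  have : T * T = V * (D * D * W) := by
    calc T * T = (V * D * W) * (V * D * W) := by rw [← h3]
      _ = V * (D * (W * V) * D * W) := by simp only [Matrix.mul_assoc]
      _ = _ := by rw [h1, Matrix.mul_one]
  rw [this, trace_mul_comm, Matrix.mul_assoc, h1, Matrix.mul_one, hD, diagonal_mul_diagonal, trace_diagonal]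
  simp [sq]

lemma psd_factor {B : Matrix (Fin N) (Fin N) ℂ} (hB : B.PosSemidef) : ∃ K : Matrix (Fin N) (Fin N) ℂ, B = Kᴴ * K := by
  obtain ⟨V, W, h1, h2, h4, h3⟩ := spec_form hB.1
  refine ⟨diagonal (fun i => ((√(hB.1.eigenvalues i) : ℝ) : ℂ)) * W, ?_⟩
  have hW : Wᴴ = V := by rw [h4, conjTranspose_conjTranspose]
  rw [conjTranspose_mul, hW, diagonal_conjTranspose, Matrix.mul_assoc, ← Matrix.mul_assoc (diagonal _), diagonal_mul_diagonal, ← Matrix.mul_assoc]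
  have e : (fun i => (star fun i => ((√(hB.1.eigenvalues i) : ℝ) : ℂ)) i * ((√(hB.1.eigenvalues i) : ℝ) : ℂ)) = fun i => (hB.1.eigenvalues i : ℂ) := by
    ext i
    have := Real.mul_self_sqrt (hB.eigenvalues_nonneg i)
    simp only [Pi.star_apply, Complex.star_def, Complex.conj_ofReal]
    exact_mod_cast this
  rw [e]; exact h3

lemma one_le_det {Q : Matrix (Fin N) (Fin N) ℂ} (hQ : Q.PosSemidef) : 1 ≤ (1 + Q).det := by
  have := det_one_add_smul hQ.1 1
  rw [one_smul] at this
  rw [this]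
  have h : (1 : ℝ) ≤ ∏ i, (1 + hQ.1.eigenvalues i) :=
    Finset.prod_induction _ (fun x => (1 : ℝ) ≤ x) (fun a b ha hb => one_le_mul_of_one_le_of_one_le ha hb) le_rfl
      fun i _ => by linarith [hQ.eigenvalues_nonneg i]
  have h2 : ((1 : ℝ) : ℂ) ≤ ((∏ i, (1 + hQ.1.eigenvalues i) : ℝ) : ℂ) := by exact_mod_cast h
  push_cast at h2
  simpa using h2

lemma det_add_factor {M K : Matrix (Fin N) (Fin N) ℂ} (hM : M.PosDef) :
    (M + Kᴴ * K).det = M.det * (1 + K * M⁻¹ * Kᴴ).det := by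
  have hu : IsUnit M.det := (Matrix.isUnit_iff_isUnit_det _).1 hM.isUnit
  rw [Matrix.mul_assoc, det_one_add_mul_comm, ← det_mul, Matrix.mul_add, Matrix.mul_one, Matrix.mul_assoc M⁻¹,
    ← Matrix.mul_assoc M, Matrix.mul_nonsing_inv _ hu, Matrix.one_mul]

lemma det_mono {M Q : Matrix (Fin N) (Fin N) ℂ} (hM : M.PosDef) (hQ : Q.PosSemidef) : M.det ≤ (M + Q).det := by
  obtain ⟨K, rfl⟩ := psd_factor hQ
  rw [det_add_factor hM]
  exact le_mul_of_one_le_right hM.det_pos.le (one_le_det (hM.inv.posSemidef.mul_mul_conjTranspose_same K))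

lemma det_submul {A B : Matrix (Fin N) (Fin N) ℂ} (hA : A.PosSemidef) (hB : B.PosSemidef) :
    (1 + A + B).det ≤ (1 + A).det * (1 + B).det := by
  have hP : (1 + A).PosDef := PosDef.one.add_posSemidef hA
  have hu : IsUnit (1 + A).det := (Matrix.isUnit_iff_isUnit_det _).1 hP.isUnit
  obtain ⟨K, rfl⟩ := psd_factor hB
  rw [det_add_factor hP]
  refine mul_le_mul_of_nonneg_left ?_ hP.det_pos.le
  rw [det_one_add_mul_comm Kᴴ K]
  have h1 : (1 - (1 + A)⁻¹).PosSemidef := by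
    have h2 : (A + A * A).PosSemidef := hA.add (by
      have := posSemidef_conjTranspose_mul_self A
      rwa [hA.1] at this)
    have h3 := h2.mul_mul_conjTranspose_same (1 + A)⁻¹
    have h4 : A + A * A = (1 + A) * A := by rw [Matrix.add_mul, Matrix.one_mul]
    rw [hP.inv.1, h4, ← Matrix.mul_assoc, Matrix.nonsing_inv_mul _ hu, Matrix.one_mul] at h3
    convert h3 using 1
    have : (1 + A - 1) * (1 + A)⁻¹ = A * (1 + A)⁻¹ := by rw [add_sub_cancel_left]
    rw [← this, Matrix.sub_mul, Matrix.mul_nonsing_inv _ hu, Matrix.one_mul]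
  have h5 := det_mono (PosDef.one.add_posSemidef (hP.inv.posSemidef.mul_mul_conjTranspose_same K)) (h1.mul_mul_conjTranspose_same K)
  convert h5 using 2
  rw [Matrix.mul_sub, Matrix.sub_mul, Matrix.mul_one]; abel

lemma eig_le_one {T : Matrix (Fin N) (Fin N) ℂ} (hT : T.IsHermitian) (h : (1 - T).PosSemidef) (i : Fin N) :
    hT.eigenvalues i ≤ 1 := by
  have h1 := h.dotProduct_mulVec_nonneg (hT.eigenvectorBasis i)
  have h2 := hT.eigenvalues_eq i
  rw [Matrix.sub_mulVec, Matrix.one_mulVec, dotProduct_sub] at h1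
  have h3 : star (hT.eigenvectorBasis i).ofLp ⬝ᵥ (hT.eigenvectorBasis i).ofLp = (1 : ℂ) := by
    have := hT.eigenvectorBasis.orthonormal.1 i
    have h4 := inner_self_eq_norm_sq_to_K (𝕜 := ℂ) (hT.eigenvectorBasis i)
    rw [this, EuclideanSpace.inner_eq_star_dotProduct] at h4
    rw [dotProduct_comm, h4]; simp
  rw [h3] at h1
  have := (Complex.le_def.1 h1).1
  simp only [Complex.sub_re, Complex.zero_re, Complex.one_re] at this
  rw [h2]
  exact sub_nonneg.1 this
end LA

section TT
variable {N : ℕ}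

lemma Tm_quad (a b : ℝ) (x : Fin N → ℂ) :
    star x ⬝ᵥ (Tm N a b *ᵥ x) = ((1 / (2 * π) * ∫ t in a..b, ‖∑ j, x j * Complex.exp (Complex.I * j * t)‖ ^ 2 : ℝ) : ℂ) := by
  have h1 : ∀ t : ℝ, ((‖∑ j, x j * Complex.exp (Complex.I * j * t)‖ ^ 2 : ℝ) : ℂ)
      = ∑ i, ∑ j, star (x i) * x j * Complex.exp (-(Complex.I * ((i : ℤ) - (j : ℤ) : ℤ) * t)) := by
    intro t
    push_cast
    rw [← Complex.conj_mul', map_sum, Finset.sum_mul_sum]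
    refine Finset.sum_congr rfl fun i _ => Finset.sum_congr rfl fun j _ => ?_
    rw [map_mul, ← Complex.exp_conj]
    simp only [map_mul, Complex.conj_I, Complex.conj_ofReal, Complex.conj_natCast]
    rw [mul_mul_mul_comm, ← Complex.exp_add]
    congr 2
    push_cast; ring
  rw [Complex.ofReal_mul, ← intervalIntegral.integral_ofReal]
  simp only [h1]
  rw [intervalIntegral.integral_finsetSum, dotProduct, Finset.mul_sum]
  swap
  · intro i _; exact (by fun_prop : Continuous _).intervalIntegrable _ _
  refine Finset.sum_congr rfl fun i _ => ?_
  rw [intervalIntegral.integral_finsetSum, mulVec, dotProduct, Finset.mul_sum, Finset.mul_sum]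
  swap
  · intro j _; exact (by fun_prop : Continuous _).intervalIntegrable _ _
  refine Finset.sum_congr rfl fun j _ => ?_
  rw [intervalIntegral.integral_const_mul]
  simp only [Tm, of_apply, kap, Complex.real_smul, Pi.star_apply]
  ring

lemma kap_conj (n : ℤ) (a b : ℝ) : star (kap n a b) = kap (-n) a b := by
  rw [kap, kap, Complex.star_def, Complex.real_smul, Complex.real_smul, map_mul, Complex.conj_ofReal]
  congr 1
  rw [intervalIntegral, intervalIntegral, map_sub, ← integral_conj, ← integral_conj]
  simp only [← Complex.exp_conj]
  simp

lemma Tm_herm (a b : ℝ) : (Tm N a b).IsHermitian := by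
  ext i j
  rw [conjTranspose_apply, Tm, of_apply, of_apply, kap_conj, neg_sub]

lemma Tm_psd {a b : ℝ} (h : a ≤ b) : (Tm N a b).PosSemidef := by
  refine .of_dotProduct_mulVec_nonneg (Tm_herm a b) fun x => ?_
  rw [Tm_quad]
  have := intervalIntegral.integral_nonneg h (μ := volume) (f := fun t => ‖∑ j, x j * Complex.exp (Complex.I * j * t)‖ ^ 2) (fun t _ => by positivity)
  have hp := Real.pi_pos
  exact_mod_cast mul_nonneg (by positivity) this

lemma one_sub_Tm_psd {b : ℝ} (h : b ≤ 2 * π) : (1 - Tm N 0 b).PosSemidef := by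
  rw [← Tm_full, ← Tm_add 0 b, add_sub_cancel_left]
  exact Tm_psd h

lemma Tm_shift (a b h : ℝ) : ∃ D E : Matrix (Fin N) (Fin N) ℂ, E * D = 1 ∧ D * E = 1 ∧ Tm N (a + h) (b + h) = D * Tm N a b * E := by
  refine ⟨diagonal (fun i => Complex.exp (-(Complex.I * (i : ℕ) * h))), diagonal (fun i => Complex.exp (Complex.I * (i : ℕ) * h)), ?_, ?_, ?_⟩
  · rw [diagonal_mul_diagonal]; simp [← Complex.exp_add]
  · rw [diagonal_mul_diagonal]; simp [← Complex.exp_add]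
  · ext i j
    rw [Matrix.mul_diagonal, Matrix.diagonal_mul, Tm, Tm, of_apply, of_apply, kap_shift]
    rw [mul_right_comm (Complex.exp _) (kap _ _ _), ← Complex.exp_add]
    congr 2
    push_cast; ring

lemma det_Tm_shift (a b h : ℝ) (c : ℂ) : (1 + c • Tm N (a + h) (b + h)).det = (1 + c • Tm N a b).det := by
  obtain ⟨D, E, h1, h2, h3⟩ := Tm_shift (N := N) a b h
  have : 1 + c • Tm N (a + h) (b + h) = D * ((1 + c • Tm N a b) * E) := by
    rw [h3, Matrix.add_mul, Matrix.mul_add, Matrix.one_mul, h2, Matrix.smul_mul, Matrix.mul_smul, Matrix.mul_assoc]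
  rw [this, det_mul_comm, Matrix.mul_assoc, h1, Matrix.mul_one]

noncomputable def lam (N : ℕ) (θ : ℝ) (i : Fin N) : ℝ := (Tm_herm (N := N) 0 θ).eigenvalues i

lemma lam_nonneg {θ : ℝ} (h : 0 ≤ θ) (i : Fin N) : 0 ≤ lam N θ i := (Tm_psd h).eigenvalues_nonneg i

lemma lam_le_one {θ : ℝ} (h : θ ≤ 2 * π) (i : Fin N) : lam N θ i ≤ 1 := eig_le_one _ (one_sub_Tm_psd h) i

lemma det_lam (θ : ℝ) (c : ℂ) : (1 + c • Tm N 0 θ).det = ∏ i, (1 + c * (lam N θ i : ℂ)) := det_one_add_smul _ c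

lemma kap_zero (a b : ℝ) : kap 0 a b = ((b - a) / (2 * π) : ℝ) := by
  simp [kap]; ring

lemma sum_lam (θ : ℝ) : ∑ i, lam N θ i = N * θ / (2 * π) := by
  have := (Tm_herm (N := N) 0 θ).trace_eq_sum_eigenvalues
  simp only [trace, Matrix.diag, Tm, of_apply, sub_self, kap_zero, Finset.sum_const, card_univ, Fintype.card_fin, nsmul_eq_mul, sub_zero] at this
  have h2 : (∑ i, lam N θ i : ℂ) = ((N * (θ / (2 * π)) : ℝ) : ℂ) := by
    rw [Complex.ofReal_mul]; exact this.symm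
  rw [mul_div_assoc]; exact_mod_cast h2

lemma sum_lam_sq (θ : ℝ) : ∑ i, lam N θ i ^ 2 = ∑ i : Fin N, ∑ j : Fin N, ‖kap ((i : ℤ) - (j : ℤ)) 0 θ‖ ^ 2 := by
  have h := trace_sq (Tm_herm (N := N) 0 θ)
  have h2 : (Tm N 0 θ * Tm N 0 θ).trace = ((∑ i : Fin N, ∑ j : Fin N, ‖kap ((i : ℤ) - (j : ℤ)) 0 θ‖ ^ 2 : ℝ) : ℂ) := by
    simp only [trace, Matrix.diag, Matrix.mul_apply]
    push_cast
    refine Finset.sum_congr rfl fun i _ => Finset.sum_congr rfl fun j _ => ?_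
    rw [Tm, of_apply, of_apply, ← Complex.mul_conj', ← Complex.star_def, kap_conj, neg_sub]
  rw [h2] at h
  exact_mod_cast h.symm
end TT
end KolmHaar

namespace KolmHaar
open Matrix Finset

section VV
variable {N : ℕ}

noncomputable def vv (N : ℕ) (θ : ℝ) : ℝ := ∑ i, lam N θ i * (1 - lam N θ i)

lemma kap_norm (n : ℤ) (hn : n ≠ 0) (a b : ℝ) : ‖kap n a b‖ ^ 2 ≤ (π ^ 2)⁻¹ * ((n : ℝ) ^ 2)⁻¹ := by
  have hp := Real.pi_pos
  have hc : (-(Complex.I * n) : ℂ) ≠ 0 := by simp [hn]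
  have h1 : ‖kap n a b‖ ≤ (π * |(n : ℝ)|)⁻¹ := by
    have e : ∫ x in a..b, Complex.exp (-(Complex.I * n * x)) = (Complex.exp (-(Complex.I * n) * b) - Complex.exp (-(Complex.I * n) * a)) / (-(Complex.I * n)) := by
      rw [← integral_exp_mul_complex hc]; simp only [neg_mul]
    have hn' : ∀ t : ℝ, ‖Complex.exp (-(Complex.I * n) * t)‖ = 1 := by
      intro t
      rw [show (-(Complex.I * n) * t : ℂ) = ((-(n * t) : ℝ) : ℂ) * Complex.I by push_cast; ring]
      exact Complex.norm_exp_ofReal_mul_I _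
    rw [kap, e, norm_smul, norm_div (Complex.exp _ - _)]
    have h2 : ‖(-(Complex.I * n) : ℂ)‖ = |(n : ℝ)| := by simp
    have h3 := norm_sub_le (Complex.exp (-(Complex.I * n) * b)) (Complex.exp (-(Complex.I * n) * a))
    rw [hn', hn'] at h3
    have h4 : 0 < |(n : ℝ)| := by positivity
    rw [h2, Real.norm_of_nonneg (by positivity)]
    calc _ ≤ 1 / (2 * π) * ((1 + 1) / |(n : ℝ)|) := by gcongr
      _ = _ := by field_simp; norm_num
  calc ‖kap n a b‖ ^ 2 ≤ ((π * |(n : ℝ)|)⁻¹) ^ 2 := by gcongr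
    _ = _ := by rw [inv_pow, mul_pow, sq_abs, mul_inv]

lemma parseval {θ : ℝ} (h0 : 0 ≤ θ) (h1 : θ ≤ 2 * π) : HasSum (fun n : ℤ => ‖kap n 0 θ‖ ^ 2) (θ / (2 * π)) := by
  have hp := Real.pi_pos
  have h2 : (0 : ℝ) < 2 * π := by positivity
  set f : ℝ → ℂ := (Set.Iic θ).indicator 1 with hf
  have hL : MemLp f 2 (volume.restrict (Set.Ioc 0 (2 * π))) := by
    refine MemLp.indicator measurableSet_Iic ?_
    exact memLp_const 1
  have h := hasSum_sq_fourierCoeffOn h2 hL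
  have hset : Set.Ioc 0 (2 * π) ∩ Set.Iic θ = Set.Ioc 0 θ := by
    ext x; simp only [Set.mem_inter_iff, Set.mem_Ioc, Set.mem_Iic]
    constructor
    · rintro ⟨h2, h3⟩; exact ⟨h2.1, h3⟩
    · rintro ⟨h2, h3⟩; exact ⟨⟨h2, h3.trans h1⟩, h3⟩
  convert h using 1
  · ext n
    rw [fourierCoeffOn_eq_integral, kap, sub_zero]
    congr 3
    rw [intervalIntegral.integral_of_le h0, intervalIntegral.integral_of_le h2.le, ← hset, ← setIntegral_indicator measurableSet_Iic]
    congr 1; ext x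
    have := fourier_neg_eq n x
    by_cases hx : x ∈ Set.Iic θ
    · simp only [hf, Set.indicator_of_mem hx, Pi.one_apply, smul_eq_mul, mul_one]
      rw [← this]
    · simp [hf, hx]
  · have : ∀ x, ‖f x‖ ^ 2 = (Set.Iic θ).indicator (fun _ => (1 : ℝ)) x := by
      intro x; by_cases hx : x ∈ Set.Iic θ
      · simp only [hf, Set.indicator_of_mem hx]; simp
      · simp [hf, hx]
    simp only [this]
    rw [intervalIntegral.integral_of_le h2.le, setIntegral_indicator measurableSet_Iic, hset, ← intervalIntegral.integral_of_le h0]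
    simp; ring

lemma tail_sum (G : Finset ℕ) (m : ℕ) (h : ∀ n ∈ G, m < n) : ∑ n ∈ G, ((n : ℝ) ^ 2)⁻¹ ≤ 2 / (m + 1) := by
  refine le_trans ?_ (sum_Ioo_inv_sq_le (α := ℝ) m (G.sup id + 1))
  refine Finset.sum_le_sum_of_subset_of_nonneg (fun n hn => ?_) (fun _ _ _ => by positivity)
  rw [Finset.mem_Ioo]
  exact ⟨h n hn, Nat.lt_succ_of_le (Finset.le_sup (f := id) hn)⟩

lemma row_bound {θ : ℝ} (h0 : 0 ≤ θ) (h1 : θ ≤ 2 * π) (i : Fin N) :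
    θ / (2 * π) ≤ ∑ j : Fin N, ‖kap ((i : ℤ) - (j : ℤ)) 0 θ‖ ^ 2 + (π ^ 2)⁻¹ * (2 / ((i : ℕ) + 1) + 2 / ((N - 1 - i : ℕ) + 1)) := by
  refine hasSum_le_of_sum_le (parseval h0 h1) fun F => ?_
  set S : Finset ℤ := univ.image (fun j : Fin N => (i : ℤ) - (j : ℤ)) with hS
  have hi := i.2
  have memS : ∀ n : ℤ, n ∉ S → (i : ℤ) < n ∨ n < (i : ℤ) - (N - 1 : ℕ) := by
    intro n hn
    by_contra! hc
    apply hn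
    rw [hS, Finset.mem_image]
    refine ⟨⟨((i : ℤ) - n).toNat, by omega⟩, mem_univ _, ?_⟩
    simp; omega
  have eS : ∑ j : Fin N, ‖kap ((i : ℤ) - (j : ℤ)) 0 θ‖ ^ 2 = ∑ n ∈ S, ‖kap n 0 θ‖ ^ 2 := by
    rw [hS, Finset.sum_image]
    intro a _ b _ hab
    ext; simp at hab; omega
  rw [eS, ← Finset.sum_filter_add_sum_filter_not F (· ∈ S)]
  refine add_le_add (Finset.sum_le_sum_of_subset_of_nonneg (fun n hn => (Finset.mem_filter.1 hn).2) (fun _ _ _ => by positivity)) ?_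
  set H := F.filter (· ∉ S) with hH
  have hne : ∀ n ∈ H, n ≠ 0 := by
    intro n hn
    have := memS n (Finset.mem_filter.1 hn).2
    omega
  calc ∑ n ∈ H, ‖kap n 0 θ‖ ^ 2 ≤ ∑ n ∈ H, (π ^ 2)⁻¹ * ((n : ℝ) ^ 2)⁻¹ := Finset.sum_le_sum fun n hn => kap_norm n (hne n hn) _ _
    _ = (π ^ 2)⁻¹ * ∑ n ∈ H, ((n : ℝ) ^ 2)⁻¹ := by rw [Finset.mul_sum]
    _ ≤ _ := by
      refine mul_le_mul_of_nonneg_left ?_ (by positivity)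
      rw [← Finset.sum_filter_add_sum_filter_not H (0 < ·)]
      have key : ∀ (G : Finset ℤ) (m : ℕ), (∀ n ∈ G, m < n.natAbs) → Set.InjOn Int.natAbs (G : Set ℤ) → ∑ n ∈ G, ((n : ℝ) ^ 2)⁻¹ ≤ 2 / (m + 1) := by
        intro G m hG hinj
        have := tail_sum (G.image Int.natAbs) m (by
          intro n hn; obtain ⟨k, hk, rfl⟩ := Finset.mem_image.1 hn; exact hG k hk)
        rw [Finset.sum_image hinj] at this
        refine le_of_eq_of_le (Finset.sum_congr rfl fun n _ => ?_) this
        rw [Nat.cast_natAbs, Int.cast_abs, sq_abs]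
      refine add_le_add (key _ _ ?_ ?_) (key _ _ ?_ ?_)
      · intro n hn
        obtain ⟨hn1, hn2⟩ := Finset.mem_filter.1 hn
        have := memS n (Finset.mem_filter.1 hn1).2
        omega
      · intro n hn k hk hnk
        have h3 := (Finset.mem_filter.1 (Finset.mem_coe.1 hn)).2
        have h4 := (Finset.mem_filter.1 (Finset.mem_coe.1 hk)).2
        omega
      · intro n hn
        obtain ⟨hn1, hn2⟩ := Finset.mem_filter.1 hn
        have := memS n (Finset.mem_filter.1 hn1).2
        omega
      · intro n hn k hk hnk
        have h3 := (Finset.mem_filter.1 (Finset.mem_coe.1 hn)).2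
        have h4 := (Finset.mem_filter.1 (Finset.mem_coe.1 hk)).2
        omega

lemma vv_le {θ : ℝ} (h0 : 0 ≤ θ) (h1 : θ ≤ 2 * π) : vv N θ ≤ (π ^ 2)⁻¹ * (4 * (1 + Real.log N)) := by
  have e1 : vv N θ = ∑ i : Fin N, (θ / (2 * π) - ∑ j : Fin N, ‖kap ((i : ℤ) - (j : ℤ)) 0 θ‖ ^ 2) := by
    rw [Finset.sum_sub_distrib, ← sum_lam_sq]
    simp only [Finset.sum_const, card_univ, Fintype.card_fin, nsmul_eq_mul]
    rw [← mul_div_assoc, ← sum_lam, ← Finset.sum_sub_distrib, vv]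
    exact Finset.sum_congr rfl fun i _ => by ring
  have e2 : ∑ i : Fin N, (2 : ℝ) / ((i : ℕ) + 1) = 2 * (harmonic N : ℝ) := by
    rw [Fin.sum_univ_eq_sum_range (fun i => (2 : ℝ) / ((i : ℕ) + 1)) N, harmonic, Rat.cast_sum, Finset.mul_sum]
    refine Finset.sum_congr rfl fun i _ => ?_
    push_cast; rw [div_eq_mul_inv]
  have e3 : ∑ i : Fin N, (2 : ℝ) / ((N - 1 - i : ℕ) + 1) = 2 * (harmonic N : ℝ) := by
    rw [← e2, Fin.sum_univ_eq_sum_range (fun i => (2 : ℝ) / ((i : ℕ) + 1)) N, Fin.sum_univ_eq_sum_range (fun i => (2 : ℝ) / ((N - 1 - i : ℕ) + 1)) N]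
    exact Finset.sum_range_reflect (fun i => (2 : ℝ) / ((i : ℕ) + 1)) N
  calc vv N θ ≤ ∑ i : Fin N, (π ^ 2)⁻¹ * ((2 : ℝ) / ((i : ℕ) + 1) + 2 / ((N - 1 - i : ℕ) + 1)) := by
        rw [e1]; exact Finset.sum_le_sum fun i _ => by linarith [row_bound h0 h1 i]
    _ = (π ^ 2)⁻¹ * (4 * harmonic N) := by rw [← Finset.mul_sum, Finset.sum_add_distrib, e2, e3]; ring
    _ ≤ _ := by
      have := harmonic_le_one_add_log N
      gcongr

lemma cnt_le (A : Set Cir) (U : UG N) : cnt A U ≤ N := by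
  classical
  unfold cnt; exact (Finset.card_le_univ _).trans (by simp)

lemma prod_expand {ι : Type*} (s : Finset ι) (l : ι → ℂ) :
    ∃ r : Polynomial ℂ, ∏ i ∈ s, (1 + Polynomial.C (l i) * Polynomial.X) = 1 + Polynomial.C (∑ i ∈ s, l i) * Polynomial.X
      + Polynomial.C (((∑ i ∈ s, l i) ^ 2 - ∑ i ∈ s, l i ^ 2) / 2) * Polynomial.X ^ 2 + r * Polynomial.X ^ 3 := by
  classical
  induction s using Finset.induction_on with
  | empty => exact ⟨0, by simp⟩
  | insert a s ha ih =>
    obtain ⟨r, hr⟩ := ih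
    refine ⟨r + Polynomial.C (l a) * Polynomial.X * r + Polynomial.C (l a) * Polynomial.C (((∑ i ∈ s, l i) ^ 2 - ∑ i ∈ s, l i ^ 2) / 2), ?_⟩
    rw [Finset.prod_insert ha, hr, Finset.sum_insert ha, Finset.sum_insert ha]
    have : ((l a + ∑ i ∈ s, l i) ^ 2 - (l a ^ 2 + ∑ i ∈ s, l i ^ 2)) / 2 = ((∑ i ∈ s, l i) ^ 2 - ∑ i ∈ s, l i ^ 2) / 2 + l a * ∑ i ∈ s, l i := by ring
    rw [this]
    simp only [Polynomial.C_add, Polynomial.C_mul]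
    ring

lemma moments (ℙ : Measure (UG N)) [IsProbabilityMeasure ℙ] [ℙ.IsHaarMeasure] {θ : ℝ} (h0 : 0 ≤ θ) (h1 : θ < 2 * π) :
    ProbabilityTheory.variance (fun U : UG N => (cnt (Karc θ) U : ℝ)) ℙ = vv N θ := by
  have hm := meas_cnt_Karc ℙ h0 h1
  set X : UG N → ℕ := fun U => cnt (Karc θ) U with hX
  set p : ℕ → ℝ := fun k => ℙ.real (X ⁻¹' {k}) with hp
  have hset : ∀ k, MeasurableSet (X ⁻¹' {k}) := fun k => hm (measurableSet_singleton k)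
  have hE : ∀ f : ℕ → ℂ, ∫ U, f (X U) ∂ℙ = ∑ k ∈ range (N + 1), (p k : ℂ) * f k := by
    intro f
    have : ∀ U, f (X U) = ∑ k ∈ range (N + 1), (X ⁻¹' {k}).indicator (fun _ => f k) U := by
      intro U
      rw [Finset.sum_eq_single (X U)]
      · simp
      · intro k _ hk; simp [hk.symm]
      · intro h; exact absurd (Finset.mem_range.2 (Nat.lt_succ_of_le (cnt_le _ U))) h
    simp only [this]
    rw [integral_finsetSum _ (fun k _ => (integrable_const (f k)).indicator (hset k))]
    refine Finset.sum_congr rfl fun k _ => ?_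
    rw [integral_indicator_const _ (hset k), Complex.real_smul]
  have hpoly : ∑ k ∈ range (N + 1), Polynomial.C (p k : ℂ) * (1 + Polynomial.X) ^ k
      = ∏ i, (1 + Polynomial.C (lam N θ i : ℂ) * Polynomial.X) := by
    refine Polynomial.funext fun c => ?_
    have := E_Karc ℙ c h0 h1
    rw [hE (fun k => (1 + c) ^ k), det_lam] at this
    rw [Polynomial.eval_finsetSum, Polynomial.eval_prod]
    simp only [Polynomial.eval_mul, Polynomial.eval_C, Polynomial.eval_pow, Polynomial.eval_add, Polynomial.eval_one, Polynomial.eval_X]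
    rw [this]
    exact Finset.prod_congr rfl fun i _ => by ring
  obtain ⟨r, hr⟩ := prod_expand univ (fun i => (lam N θ i : ℂ))
  rw [hr] at hpoly
  have c1 : ∑ k ∈ range (N + 1), (p k : ℂ) * k = ∑ i, (lam N θ i : ℂ) := by
    have := congrArg (fun q => Polynomial.coeff q 1) hpoly
    simpa [Polynomial.finsetSum_coeff, Polynomial.coeff_one_add_X_pow, Polynomial.coeff_one, Polynomial.coeff_X_pow, Polynomial.coeff_mul_X_pow'] using this
  have c2 : ∑ k ∈ range (N + 1), (p k : ℂ) * (k.choose 2 : ℕ) = ((∑ i, (lam N θ i : ℂ)) ^ 2 - ∑ i, (lam N θ i : ℂ) ^ 2) / 2 := by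
    have := congrArg (fun q => Polynomial.coeff q 2) hpoly
    simpa [Polynomial.finsetSum_coeff, Polynomial.coeff_one_add_X_pow, Polynomial.coeff_one, Polynomial.coeff_X, Polynomial.coeff_mul_X_pow'] using this
  have hb : MemLp (fun U => (X U : ℝ)) 2 ℙ := by
    refine MemLp.of_bound (C := N) (by fun_prop) (ae_of_all _ fun U => ?_)
    simp only [Real.norm_natCast]
    exact_mod_cast cnt_le _ U
  rw [ProbabilityTheory.variance_eq_sub hb]
  have m1 : (∫ U, (X U : ℝ) ∂ℙ) = ∑ i, lam N θ i := by
    have := hE (fun k => (k : ℂ))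
    rw [c1] at this
    have h2 : ((∫ U, (X U : ℝ) ∂ℙ : ℝ) : ℂ) = ∫ U, ((X U : ℕ) : ℂ) ∂ℙ := by
      rw [← integral_complex_ofReal]; simp
    rw [← h2] at this
    exact_mod_cast this
  have m2 : (∫ U, (X U : ℝ) ^ 2 ∂ℙ) = (∑ i, lam N θ i) ^ 2 - ∑ i, lam N θ i ^ 2 + ∑ i, lam N θ i := by
    have := hE (fun k => (k : ℂ) ^ 2)
    have h3 : ∑ k ∈ range (N + 1), (p k : ℂ) * (k : ℂ) ^ 2 = 2 * ∑ k ∈ range (N + 1), (p k : ℂ) * (k.choose 2 : ℕ) + ∑ k ∈ range (N + 1), (p k : ℂ) * k := by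
      rw [Finset.mul_sum, ← Finset.sum_add_distrib]
      refine Finset.sum_congr rfl fun k _ => ?_
      rw [Nat.cast_choose_two]; ring
    rw [h3, c1, c2] at this
    have h2 : ((∫ U, (X U : ℝ) ^ 2 ∂ℙ : ℝ) : ℂ) = ∫ U, ((X U : ℕ) : ℂ) ^ 2 ∂ℙ := by
      rw [← integral_complex_ofReal]; simp
    rw [← h2, mul_div_cancel₀ _ two_ne_zero] at this
    exact_mod_cast this
  have m2' : ∫ U, ((fun U => (X U : ℝ)) ^ 2) U ∂ℙ = ∫ U, (X U : ℝ) ^ 2 ∂ℙ := rfl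
  rw [m2', m1, m2, vv]
  simp only [mul_sub, mul_one, Finset.sum_sub_distrib, ← sq]
  ring
end VV
end KolmHaar

namespace KolmHaar
open Matrix Finset

section DK
variable {N : ℕ}

noncomputable def gg (U : UG N) (θ : ℝ) : ℝ := |(countFun N U θ : ℝ) / N - θ / (2 * π)|

lemma gg_le_one (U : UG N) {θ : ℝ} (h : θ ∈ Set.Ico 0 (2 * π)) : gg U θ ≤ 1 := by
  have hp := Real.pi_pos
  have h1 : (countFun N U θ : ℝ) / N ≤ 1 := by
    rw [countFun_eq U h.2]
    exact div_le_one_of_le₀ (by exact_mod_cast cnt_le _ U) (by positivity)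
  have h2 : (0 : ℝ) ≤ (countFun N U θ : ℝ) / N := by positivity
  have h3 : θ / (2 * π) ≤ 1 := div_le_one_of_le₀ h.2.le (by positivity)
  have h4 : 0 ≤ θ / (2 * π) := div_nonneg h.1 (by positivity)
  rw [gg, abs_le]; constructor <;> linarith

lemma gg_bdd (U : UG N) : BddAbove (Set.range fun θ : Set.Ico (0:ℝ) (2 * π) => gg U θ) :=
  ⟨1, by rintro _ ⟨θ, rfl⟩; exact gg_le_one U θ.2⟩

lemma le_dK (U : UG N) {θ : ℝ} (h : θ ∈ Set.Ico 0 (2 * π)) : gg U θ ≤ dK N U :=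
  le_ciSup (gg_bdd U) (⟨θ, h⟩ : Set.Ico (0:ℝ) (2 * π))

lemma zero_mem_Ico : (0 : ℝ) ∈ Set.Ico 0 (2 * π) := ⟨le_rfl, by positivity⟩

lemma dK_nonneg (U : UG N) : 0 ≤ dK N U := (abs_nonneg _).trans (le_dK U zero_mem_Ico)

lemma dK_le_one (U : UG N) : dK N U ≤ 1 := by
  haveI : Nonempty (Set.Ico (0:ℝ) (2 * π)) := ⟨⟨0, zero_mem_Ico⟩⟩
  exact ciSup_le fun θ => gg_le_one U θ.2

abbrev QI := {q : ℚ // (q : ℝ) ∈ Set.Ico 0 (2 * π)}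

lemma cnt_ev (U : UG N) {θ : ℝ} (h : θ ∈ Set.Ico 0 (2 * π)) :
    ∀ᶠ x in nhdsWithin θ (Set.Ioi θ), countFun N U x = countFun N U θ := by
  have h1 : ∀ᶠ x in nhdsWithin θ (Set.Ioi θ), ∀ i, (sh (zv U.1 i) ≤ x ↔ sh (zv U.1 i) ≤ θ) := by
    rw [eventually_all]
    intro i
    by_cases hi : sh (zv U.1 i) ≤ θ
    · filter_upwards [self_mem_nhdsWithin] with x hx
      exact ⟨fun _ => hi, fun _ => hi.trans (le_of_lt hx)⟩
    · push Not at hi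
      filter_upwards [Ioo_mem_nhdsGT hi] with x hx
      exact ⟨fun h' => absurd hx.2 (not_lt.2 h'), fun h' => absurd hi (not_lt.2 h')⟩
  filter_upwards [h1, Ioo_mem_nhdsGT h.2] with x hx hx2
  rw [countFun_eq U hx2.2, countFun_eq U h.2, cnt, cnt]
  congr 1
  ext i
  simp only [Finset.mem_filter, Finset.mem_univ, true_and]
  rw [← sh_coe, mem_Karc hx2.2 (sh_mem _), mem_Karc h.2 (sh_mem _), hx i]

lemma dK_eq (U : UG N) : dK N U = ⨆ q : QI, gg U (q.1 : ℝ) := by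
  haveI : Nonempty (Set.Ico (0:ℝ) (2 * π)) := ⟨⟨0, zero_mem_Ico⟩⟩
  haveI : Nonempty QI := ⟨⟨0, by simpa using zero_mem_Ico⟩⟩
  have hb : BddAbove (Set.range fun q : QI => gg U (q.1 : ℝ)) :=
    ⟨1, by rintro _ ⟨q, rfl⟩; exact gg_le_one U q.2⟩
  refine le_antisymm (ciSup_le fun θ => ?_) (ciSup_le fun q => le_dK U q.2)
  obtain ⟨θ, h⟩ := θ
  by_contra! hc
  change _ < gg U θ at hc
  have h1 : Tendsto (fun x : ℝ => |(countFun N U θ : ℝ) / N - x / (2 * π)|) (nhdsWithin θ (Set.Ioi θ)) (nhds (gg U θ)) := by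
    refine Tendsto.mono_left ?_ nhdsWithin_le_nhds
    exact (by fun_prop : Continuous (fun x : ℝ => |(countFun N U θ : ℝ) / N - x / (2 * π)|)).tendsto θ
  have h2 : ∀ᶠ x in nhdsWithin θ (Set.Ioi θ), (⨆ q : QI, gg U (q.1 : ℝ)) < gg U x ∧ x ∈ Set.Ioo θ (2 * π) := by
    filter_upwards [h1.eventually_const_lt hc, cnt_ev U h, Ioo_mem_nhdsGT h.2] with x hx hx2 hx3
    refine ⟨?_, hx3⟩
    rw [gg, hx2]; exact hx
  obtain ⟨u, hu, hsub⟩ := mem_nhdsGT_iff_exists_Ioo_subset.1 h2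
  obtain ⟨q, hq1, hq2⟩ := exists_rat_btwn (show θ < u from hu)
  have h3 := hsub ⟨hq1, hq2⟩
  exact absurd (le_ciSup hb (⟨q, ⟨h.1.trans hq1.le, h3.2.2⟩⟩ : QI)) (not_le.2 h3.1)

lemma dK_meas (ℙ : Measure (UG N)) [IsProbabilityMeasure ℙ] [ℙ.IsHaarMeasure] : Measurable (dK N) := by
  have : dK N = fun U => ⨆ q : QI, gg U (q.1 : ℝ) := funext dK_eq
  rw [this]
  refine Measurable.iSup fun q => ?_
  have h := meas_cnt_Karc ℙ q.2.1 q.2.2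
  simp only [gg, countFun_eq _ q.2.2]
  fun_prop

lemma dK_int (ℙ : Measure (UG N)) [IsProbabilityMeasure ℙ] [ℙ.IsHaarMeasure] : Integrable (dK N) ℙ := by
  refine Integrable.of_bound (dK_meas ℙ).aestronglyMeasurable 1 (ae_of_all _ fun U => ?_)
  rw [Real.norm_of_nonneg (dK_nonneg U)]; exact dK_le_one U

lemma dK_ge (hN : 0 < N) (U : UG N) : 1 / (2 * N) ≤ dK N U := by
  have hp := Real.pi_pos
  have hN' : (1 : ℝ) ≤ N := by exact_mod_cast hN
  have hm : π / N ∈ Set.Ico 0 (2 * π) := by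
    refine ⟨by positivity, ?_⟩
    rw [div_lt_iff₀ (by positivity)]; nlinarith
  refine le_trans ?_ (le_dK U hm)
  rw [gg]
  have e : (countFun N U (π / N) : ℝ) / N - π / N / (2 * π) = ((countFun N U (π / N) : ℝ) - 1 / 2) / N := by
    field_simp
  rw [e, abs_div, abs_of_nonneg (by positivity : (0 : ℝ) ≤ N)]
  have : (1 : ℝ) / 2 ≤ |(countFun N U (π / N) : ℝ) - 1 / 2| := by
    rcases Nat.eq_zero_or_pos (countFun N U (π / N)) with h | h
    · rw [h]; norm_num
    · have : (1 : ℝ) ≤ (countFun N U (π / N) : ℝ) := by exact_mod_cast h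
      exact le_abs.2 (Or.inl (by linarith))
  rw [← div_div]; gcongr

lemma count_dev (hN : 0 < N) (U : UG N) {θ : ℝ} (h : θ ∈ Set.Ico 0 (2 * π)) :
    |(cnt (Karc θ) U : ℝ) - N * θ / (2 * π)| ≤ N * dK N U := by
  have := le_dK U h
  have hN' : (0 : ℝ) < N := by exact_mod_cast hN
  rw [gg, countFun_eq U h.2] at this
  calc _ = N * |(cnt (Karc θ) U : ℝ) / N - θ / (2 * π)| := by
        rw [← abs_of_pos hN', ← abs_mul, abs_of_pos hN']; congr 1; field_simp
    _ ≤ _ := by gcongr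

lemma arc_dev (hN : 0 < N) (U : UG N) {a b : ℝ} (h0 : 0 ≤ a) (hab : a ≤ b) (h1 : b < 2 * π) :
    (cnt (Jarc a b) U : ℝ) ≤ N * (b - a) / (2 * π) + 2 * (N * dK N U) := by
  have h2 : (cnt (Jarc a b) U : ℝ) + cnt (Karc a) U = cnt (Karc b) U := by exact_mod_cast cnt_Jarc hab U
  have h3 := (abs_le.1 (count_dev hN U (θ := a) ⟨h0, hab.trans_lt h1⟩)).1
  have h4 := (abs_le.1 (count_dev hN U (θ := b) ⟨h0.trans hab, h1⟩)).2
  have : N * (b - a) / (2 * π) = N * b / (2 * π) - N * a / (2 * π) := by ring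
  linarith
end DK

section EE
variable {N : ℕ}

lemma meas_cnt_Jarc (ℙ : Measure (UG N)) [IsProbabilityMeasure ℙ] [ℙ.IsHaarMeasure] {a b : ℝ} (h0 : 0 ≤ a) (hab : a ≤ b) (h1 : b < 2 * π) :
    Measurable (fun U : UG N => cnt (Jarc a b) U) := by
  have : (fun U : UG N => cnt (Jarc a b) U) = fun U => cnt (Karc b) U - cnt (Karc a) U := by
    ext U; have := cnt_Jarc hab U; omega
  rw [this]
  exact (meas_cnt_Karc ℙ (h0.trans hab) h1).sub (meas_cnt_Karc ℙ h0 (hab.trans_lt h1))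

lemma EJ (ℙ : Measure (UG N)) [IsProbabilityMeasure ℙ] [ℙ.IsHaarMeasure] (c : ℝ) {θ h : ℝ} (h0 : 0 ≤ h) (hθ : 0 ≤ θ)
    (h1 : θ + h < 2 * π) :
    ∫ U : UG N, (1 + c) ^ (cnt (Jarc h (θ + h)) U) ∂ℙ = ∏ i, (1 + c * lam N θ i) := by
  have := E_Jarc ℙ (c : ℂ) h0 (by linarith : h ≤ θ + h) h1
  have e := det_Tm_shift (N := N) 0 θ h (c : ℂ)
  rw [zero_add] at e
  rw [e, det_lam] at this
  have h2 : ((∫ U : UG N, (1 + c) ^ (cnt (Jarc h (θ + h)) U) ∂ℙ : ℝ) : ℂ) = ∫ U : UG N, (1 + c : ℂ) ^ (cnt (Jarc h (θ + h)) U) ∂ℙ := by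
    rw [← integral_complex_ofReal]; simp
  rw [← h2] at this
  exact_mod_cast this

lemma EJ2 (ℙ : Measure (UG N)) [IsProbabilityMeasure ℙ] [ℙ.IsHaarMeasure] {θ h h' : ℝ} (h0 : 0 ≤ h) (hθ : 0 ≤ θ)
    (hh : θ + h ≤ h') (h1 : θ + h' < 2 * π) :
    ∫ U : UG N, (2 : ℝ) ^ (cnt (Jarc h (θ + h)) U) * 2 ^ (cnt (Jarc h' (θ + h')) U) ∂ℙ ≤ (∏ i, (1 + lam N θ i)) ^ 2 := by
  have := E_Jarc2 ℙ h0 (by linarith : h ≤ θ + h) hh (by linarith : h' ≤ θ + h') h1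
  have h2 : ((∫ U : UG N, (2 : ℝ) ^ (cnt (Jarc h (θ + h)) U) * 2 ^ (cnt (Jarc h' (θ + h')) U) ∂ℙ : ℝ) : ℂ) = ∫ U : UG N, (2 : ℂ) ^ (cnt (Jarc h (θ + h)) U) * 2 ^ (cnt (Jarc h' (θ + h')) U) ∂ℙ := by
    rw [← integral_complex_ofReal]; simp
  have h3 := det_submul (Tm_psd (N := N) (by linarith : h ≤ θ + h)) (Tm_psd (N := N) (by linarith : h' ≤ θ + h'))
  have e := det_Tm_shift (N := N) 0 θ h 1
  have e' := det_Tm_shift (N := N) 0 θ h' 1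
  rw [zero_add, det_lam, one_smul] at e e'
  rw [e, e', ← this, ← h2] at h3
  have h4 := (Complex.le_def.1 h3).1
  have h5 : (∏ i, (1 + 1 * (lam N θ i : ℂ))) * (∏ i, (1 + 1 * (lam N θ i : ℂ))) = (((∏ i, (1 + lam N θ i)) ^ 2 : ℝ) : ℂ) := by
    push_cast; simp only [one_mul]; rw [sq]
  rw [h5, Complex.ofReal_re, Complex.ofReal_re] at h4
  exact h4
end EE

section Calc

lemma log_ineq {x : ℝ} (h0 : 0 ≤ x) (h1 : x ≤ 1) : x * (1 - x) / 8 ≤ Real.log (1 + x) - x * Real.log 2 := by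
  have hd : ∀ y : ℝ, 0 ≤ y → HasDerivAt (fun y : ℝ => Real.log (1 + y) + y ^ 2 / 8) (1 / (1 + y) + y / 4) y := by
    intro y hy
    have h := ((hasDerivAt_id y).const_add 1).log (by simp; linarith)
    have h2 := ((hasDerivAt_id y).pow 2).div_const 8
    refine (h.add h2).congr_deriv ?_
    simp only [id, Nat.cast_ofNat]; ring
  have hc : ConcaveOn ℝ (Set.Icc (0:ℝ) 1) (fun y : ℝ => Real.log (1 + y) + y ^ 2 / 8) := by
    refine AntitoneOn.concaveOn_of_deriv (convex_Icc 0 1) (fun y hy => (hd y hy.1).continuousAt.continuousWithinAt) (fun y hy => ?_) ?_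
    · rw [interior_Icc] at hy
      exact (hd y hy.1.le).differentiableAt.differentiableWithinAt
    · rw [interior_Icc]
      intro y hy z hz hyz
      rw [(hd y hy.1.le).deriv, (hd z hz.1.le).deriv]
      have hy0 := hy.1
      have hz0 := hz.1
      have hz1 := hz.2
      have hy1 := hy.2
      have : 1 / (1 + y) - 1 / (1 + z) = (z - y) / ((1 + y) * (1 + z)) := by field_simp; ring
      have h2 : (z - y) / 4 ≤ (z - y) / ((1 + y) * (1 + z)) := by
        apply div_le_div_of_nonneg_left (by linarith) (by positivity); nlinarith
      linarith
  have := hc.2 (show (0:ℝ) ∈ Set.Icc (0:ℝ) 1 by simp) (show (1:ℝ) ∈ Set.Icc (0:ℝ) 1 by simp) (by linarith : 0 ≤ 1 - x) h0 (by ring)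
  simp only [smul_eq_mul, mul_zero, mul_one, zero_add, add_zero, Real.log_one] at this
  norm_num at this
  linarith

lemma ratio_ineq {x : ℝ} (h0 : 0 ≤ x) (h1 : x ≤ 1) : 1 + 3 * x ≤ (1 + x) ^ 2 * Real.exp (x * (1 - x)) := by
  have h := Real.add_one_le_exp (x * (1 - x))
  have h2 : 0 ≤ x * (1 - x) := mul_nonneg h0 (by linarith)
  have : (1 + x) ^ 2 * (x * (1 - x) + 1) ≤ (1 + x) ^ 2 * Real.exp (x * (1 - x)) := by gcongr
  nlinarith [mul_nonneg h0 h2, mul_nonneg h0 (mul_nonneg h0 h2)]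
end Calc
end KolmHaar

namespace KolmHaar
open Matrix Finset

section Main
variable {N : ℕ}

lemma second_moment {Ω : Type*} [MeasurableSpace Ω] (P : Measure Ω) [IsProbabilityMeasure P] (m : ℕ) (W : ℕ → Ω → ℝ)
    (A B : ℝ) (hA : 0 ≤ A) (hitg : ∀ j ∈ range m, Integrable (W j) P)
    (hitg2 : ∀ i ∈ range m, ∀ j ∈ range m, Integrable (fun U => W i U * W j U) P)
    (h1 : ∀ j ∈ range m, ∫ U, W j U ∂P = A) (h2 : ∀ j ∈ range m, ∫ U, W j U * W j U ∂P = B)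
    (h3 : ∀ i ∈ range m, ∀ j ∈ range m, i ≠ j → ∫ U, W i U * W j U ∂P ≤ A ^ 2) :
    Integrable (fun U => (∑ j ∈ range m, W j U - m * A) ^ 2) P ∧
    ∫ U, (∑ j ∈ range m, W j U - m * A) ^ 2 ∂P ≤ m * B := by
  have hZ : Integrable (fun U => ∑ j ∈ range m, W j U) P := integrable_finsetSum _ hitg
  have hZ2 : Integrable (fun U => ∑ i ∈ range m, ∑ j ∈ range m, W i U * W j U) P :=
    integrable_finsetSum _ fun i hi => integrable_finsetSum _ fun j hj => hitg2 i hi j hj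
  have e : ∀ U, (∑ j ∈ range m, W j U - m * A) ^ 2 = (∑ i ∈ range m, ∑ j ∈ range m, W i U * W j U) - (2 * (m * A)) * (∑ j ∈ range m, W j U) + (m * A) ^ 2 := by
    intro U
    rw [← Finset.sum_mul_sum]; ring
  simp only [e]
  have hS : Integrable (fun U => (∑ i ∈ range m, ∑ j ∈ range m, W i U * W j U) - (2 * (m * A)) * (∑ j ∈ range m, W j U)) P :=
    hZ2.sub (hZ.const_mul _)
  refine ⟨hS.add (integrable_const _), ?_⟩
  rw [integral_add hS (integrable_const _), integral_sub hZ2 (hZ.const_mul _), integral_const_mul,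
    integral_finsetSum _ hitg, Finset.sum_congr rfl h1, integral_finsetSum _ (fun i hi => integrable_finsetSum _ fun j hj => hitg2 i hi j hj)]
  simp only [Finset.sum_const, card_range, nsmul_eq_mul, integral_const, probReal_univ, one_smul]
  have h4 : ∑ i ∈ range m, ∫ U, ∑ j ∈ range m, W i U * W j U ∂P ≤ ∑ i ∈ range m, (B + m * A ^ 2) := by
    refine Finset.sum_le_sum fun i hi => ?_
    rw [integral_finsetSum _ (fun j hj => hitg2 i hi j hj)]
    have h5 : ∀ j ∈ range m, ∫ U, W i U * W j U ∂P ≤ (if i = j then B else 0) + A ^ 2 := by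
      intro j hj
      by_cases h : i = j
      · subst h; rw [h2 i hi, if_pos rfl]; nlinarith [sq_nonneg A]
      · rw [if_neg h, zero_add]; exact h3 i hi j hj h
    refine (Finset.sum_le_sum h5).trans (le_of_eq ?_)
    rw [Finset.sum_add_distrib, Finset.sum_ite_eq, if_pos hi]; simp
  rw [Finset.sum_const, card_range, nsmul_eq_mul] at h4
  nlinarith [h4]

lemma core (ℙ : Measure (UG N)) [IsProbabilityMeasure ℙ] [ℙ.IsHaarMeasure] (hN : 0 < N) {θ : ℝ} (hθ : 0 ≤ θ) (m : ℕ) (hm : 0 < m)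
    (hmθ : m * θ < 2 * π) (hv : 12 ≤ vv N θ) (hv2 : 8 * Real.exp (vv N θ) ≤ m) :
    3 * vv N θ / 4096 ≤ N * ∫ U, dK N U ∂ℙ := by
  have hθ2 : θ ≤ 2 * π := by
    have : (1 : ℝ) ≤ m := by exact_mod_cast hm
    nlinarith
  have hl0 : ∀ i, 0 ≤ lam N θ i := lam_nonneg hθ
  have hl1 : ∀ i, lam N θ i ≤ 1 := lam_le_one hθ2
  set v := vv N θ with hvdef
  set A := ∏ i, (1 + lam N θ i) with hA
  set B := ∏ i, (1 + 3 * lam N θ i) with hB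
  set μ := N * θ / (2 * π) with hμ
  have hApos : 0 < A := Finset.prod_pos fun i _ => by linarith [hl0 i]
  have hBA : B ≤ A ^ 2 * Real.exp v := by
    rw [hB, hA, hvdef, vv, Real.exp_sum, ← Finset.prod_pow, ← Finset.prod_mul_distrib]
    exact Finset.prod_le_prod (fun i _ => by linarith [hl0 i]) fun i _ => ratio_ineq (hl0 i) (hl1 i)
  have hlogA : v / 8 ≤ Real.log A - μ * Real.log 2 := by
    rw [hA, Real.log_prod (fun i _ => by linarith [hl0 i]), hμ, ← sum_lam, Finset.sum_mul, ← Finset.sum_sub_distrib, hvdef, vv, Finset.sum_div]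
    exact Finset.sum_le_sum fun i _ => log_ineq (hl0 i) (hl1 i)
  set c := Real.log (A / 2) - μ * Real.log 2 with hc
  have hlog2 : Real.log 2 < 0.7 := by have := Real.log_two_lt_d9; linarith
  have hlog2' : 0 < Real.log 2 := Real.log_pos (by norm_num)
  have hcv : v / 8 - 0.7 ≤ c := by
    rw [hc, Real.log_div hApos.ne' two_ne_zero]; linarith
  have hc0 : 0 ≤ c := by linarith
  set W : ℕ → UG N → ℝ := fun j U => (2 : ℝ) ^ (cnt (Jarc (j * θ) (θ + j * θ)) U) with hW
  have hend : ∀ j ∈ range m, θ + j * θ < 2 * π := by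
    intro j hj
    have : ((j + 1 : ℕ) : ℝ) ≤ m := by exact_mod_cast Finset.mem_range.1 hj
    push_cast at this
    nlinarith
  have hst : ∀ j : ℕ, 0 ≤ j * θ := fun j => by positivity
  have hmeas : ∀ j ∈ range m, Measurable (W j) := by
    intro j hj
    have := meas_cnt_Jarc ℙ (hst j) (by linarith : j * θ ≤ θ + j * θ) (hend j hj)
    exact (measurable_from_top (f := fun k : ℕ => (2 : ℝ) ^ k)).comp this
  have hW0 : ∀ j U, 0 < W j U := fun j U => by positivity
  have hWb : ∀ j U, W j U ≤ 2 ^ N := fun j U => pow_le_pow_right₀ one_le_two (cnt_le _ U)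
  have hitg : ∀ j ∈ range m, Integrable (W j) ℙ := fun j hj =>
    Integrable.of_bound (hmeas j hj).aestronglyMeasurable (2 ^ N) (ae_of_all _ fun U => by
      rw [Real.norm_of_nonneg (hW0 j U).le]; exact hWb j U)
  have hitg2 : ∀ i ∈ range m, ∀ j ∈ range m, Integrable (fun U => W i U * W j U) ℙ := fun i hi j hj =>
    Integrable.of_bound ((hmeas i hi).mul (hmeas j hj)).aestronglyMeasurable (2 ^ N * 2 ^ N) (ae_of_all _ fun U => by
      rw [Real.norm_of_nonneg (mul_pos (hW0 i U) (hW0 j U)).le]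
      exact mul_le_mul (hWb i U) (hWb j U) (hW0 j U).le (by positivity))
  have h1 : ∀ j ∈ range m, ∫ U, W j U ∂ℙ = A := by
    intro j hj
    have := EJ ℙ 1 (hst j) hθ (hend j hj)
    norm_num at this
    exact this
  have h2 : ∀ j ∈ range m, ∫ U, W j U * W j U ∂ℙ = B := by
    intro j hj
    have := EJ ℙ 3 (hst j) hθ (hend j hj)
    rw [← hB] at this
    rw [← this]
    congr 1; ext U
    rw [hW, ← mul_pow]; norm_num
  have h3' : ∀ i ∈ range m, ∀ j ∈ range m, i < j → ∫ U, W i U * W j U ∂ℙ ≤ A ^ 2 := by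
    intro i hi j hj hij
    refine EJ2 ℙ (hst i) hθ ?_ (hend j hj)
    have : ((i + 1 : ℕ) : ℝ) ≤ j := by exact_mod_cast hij
    push_cast at this
    nlinarith
  have h3 : ∀ i ∈ range m, ∀ j ∈ range m, i ≠ j → ∫ U, W i U * W j U ∂ℙ ≤ A ^ 2 := by
    intro i hi j hj hij
    rcases lt_or_gt_of_ne hij with h | h
    · exact h3' i hi j hj h
    · simp only [mul_comm (W i _)]; exact h3' j hj i hi h
  obtain ⟨hI, hV⟩ := second_moment ℙ m W A B hApos.le hitg hitg2 h1 h2 h3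
  have hm' : (0 : ℝ) < m := by exact_mod_cast hm
  have hpt : ∀ U, c * (1 - (∑ j ∈ range m, W j U - m * A) ^ 2 / (m * A / 2) ^ 2) ≤ Real.log 2 * (2 * (N * dK N U)) := by
    intro U
    set Z := ∑ j ∈ range m, W j U
    have hd := dK_nonneg U
    by_cases hcase : m * A / 2 ≤ Z
    · have hZ : Z ≤ m * (2 : ℝ) ^ (μ + 2 * (N * dK N U)) := by
        have : ∀ j ∈ range m, W j U ≤ (2 : ℝ) ^ (μ + 2 * (N * dK N U)) := by
          intro j hj
          rw [hW]
          simp only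
          rw [← Real.rpow_natCast]
          refine Real.rpow_le_rpow_of_exponent_le one_le_two ?_
          have := arc_dev hN U (hst j) (by linarith : j * θ ≤ θ + j * θ) (hend j hj)
          rwa [add_sub_cancel_right] at this
        refine (Finset.sum_le_sum this).trans (le_of_eq ?_)
        simp
      have hA2 : A / 2 ≤ (2 : ℝ) ^ (μ + 2 * (N * dK N U)) := by
        have : m * (A / 2) ≤ m * (2 : ℝ) ^ (μ + 2 * (N * dK N U)) := by linarith
        exact le_of_mul_le_mul_left this hm'
      have hl := Real.log_le_log (by positivity) hA2
      rw [Real.log_rpow two_pos] at hl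
      have h5 : c ≤ Real.log 2 * (2 * (N * dK N U)) := by rw [hc]; linarith
      refine le_trans ?_ h5
      have : 0 ≤ (Z - m * A) ^ 2 / (m * A / 2) ^ 2 := by positivity
      nlinarith
    · push Not at hcase
      have h6 : 1 ≤ (Z - m * A) ^ 2 / (m * A / 2) ^ 2 := by
        rw [one_le_div (by positivity), ← neg_sq (Z - m * A)]
        exact pow_le_pow_left₀ (by positivity) (by linarith) 2
      have h7 : 0 ≤ Real.log 2 * (2 * (N * dK N U)) := by positivity
      nlinarith
  have hint3 : Integrable (fun U => c * (1 - (∑ j ∈ range m, W j U - m * A) ^ 2 / (m * A / 2) ^ 2)) ℙ :=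
    ((integrable_const _).sub (hI.div_const _)).const_mul _
  have hint4 : Integrable (fun U => Real.log 2 * (2 * (N * dK N U))) ℙ := (((dK_int ℙ).const_mul _).const_mul _).const_mul _
  have hE := integral_mono hint3 hint4 hpt
  rw [integral_const_mul, integral_const_mul, integral_const_mul, integral_const_mul, integral_sub (integrable_const _) (hI.div_const _),
    integral_div] at hE
  simp only [integral_const, probReal_univ, one_smul] at hE
  set I := ∫ U, dK N U ∂ℙ
  have hI0 : 0 ≤ I := integral_nonneg fun U => dK_nonneg U
  have h8 : (∫ U, (∑ j ∈ range m, W j U - m * A) ^ 2 ∂ℙ) / (m * A / 2) ^ 2 ≤ 1 / 2 := by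
    rw [div_le_iff₀ (by positivity)]
    refine hV.trans ?_
    have : m * B ≤ m * (A ^ 2 * Real.exp v) := by gcongr
    have h9 : m * A ^ 2 * (8 * Real.exp v) ≤ m * A ^ 2 * m := by gcongr
    nlinarith
  have h10 : c / 2 ≤ Real.log 2 * (2 * (N * I)) := by
    refine le_trans ?_ hE
    nlinarith
  have h11 : Real.log 2 * (2 * (N * I)) ≤ 0.7 * (2 * (N * I)) := by
    have : 0 ≤ 2 * (N * I) := by positivity
    gcongr
  linarith
end Main
end KolmHaar

open KolmHaar

theorem expected_kolmogorov_ge_variance :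
    ∃ N₀ : ℕ, ∀ N : ℕ, N₀ ≤ N →
      ∀ ℙ : Measure (Matrix.unitaryGroup (Fin N) ℂ),
        IsProbabilityMeasure ℙ → ℙ.IsHaarMeasure →
          3 * ProbabilityTheory.variance (fun U => (countFun N U (Real.sqrt N)⁻¹ : ℝ)) ℙ / (2 ^ 12 * N) ≤ ∫ U, dK N U ∂ℙ := by
  refine ⟨⌈Real.exp 30⌉₊, fun N hN ℙ hP hH => ?_⟩
  have hNe : Real.exp 30 ≤ N := Nat.ceil_le.1 hN
  have hNR : (1 : ℝ) ≤ N := le_trans (by have := Real.add_one_le_exp 30; linarith) hNe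
  have hN0 : 0 < N := by exact_mod_cast (lt_of_lt_of_le one_pos hNR)
  have hL : 30 ≤ Real.log N := by rw [Real.le_log_iff_exp_le (by linarith)]; exact hNe
  have hsq : 1 ≤ √(N : ℝ) := Real.one_le_sqrt.2 hNR
  have hpi := Real.pi_gt_three
  set θ := (√(N : ℝ))⁻¹ with hθ
  have hθ0 : 0 ≤ θ := by positivity
  have hθ1 : θ ≤ 1 := inv_le_one_of_one_le₀ hsq
  have hvar : ProbabilityTheory.variance (fun U => (countFun N U θ : ℝ)) ℙ = vv N θ := by
    rw [← moments ℙ hθ0 (by linarith)]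
    congr 1; ext U
    rw [countFun_eq U (by linarith)]
  rw [hvar]
  have hI : Integrable (dK N) ℙ := dK_int ℙ
  rcases lt_or_ge (vv N θ) 12 with hv | hv
  · have h1 : 1 / (2 * N : ℝ) ≤ ∫ U, dK N U ∂ℙ := by
      have := integral_mono (integrable_const (1 / (2 * N : ℝ))) hI (fun U => dK_ge hN0 U)
      simpa using this
    refine le_trans ?_ h1
    rw [div_le_div_iff₀ (by positivity) (by positivity)]
    nlinarith
  · have hvle := vv_le (N := N) hθ0 (by linarith)
    have hpi2 : (π ^ 2)⁻¹ ≤ 1 / 9.8 := by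
      rw [inv_le_comm₀ (by positivity) (by norm_num)]
      have := Real.pi_gt_d2
      norm_num; nlinarith
    have hv3 : vv N θ ≤ 1 / 9.8 * (4 * (1 + Real.log N)) := hvle.trans (by gcongr)
    have hm : √(N : ℝ) ≤ ⌈√(N : ℝ)⌉₊ := Nat.le_ceil _
    have hm2 := Nat.ceil_lt_add_one (Real.sqrt_nonneg (N : ℝ))
    have hmθ : (⌈√(N : ℝ)⌉₊ : ℝ) * θ < 2 * π := by
      have : √(N : ℝ) * θ = 1 := mul_inv_cancel₀ (by linarith)
      nlinarith
    have h8 : 8 * Real.exp (vv N θ) ≤ (⌈√(N : ℝ)⌉₊ : ℝ) := by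
      refine le_trans ?_ hm
      have hs : √(N : ℝ) = Real.exp (Real.log N / 2) := by
        rw [Real.exp_half, Real.exp_log (by linarith)]
      have h82 : (8 : ℝ) = Real.exp (3 * Real.log 2) := by
        rw [mul_comm, Real.exp_mul, Real.exp_log two_pos]; norm_num
      rw [hs, h82, ← Real.exp_add, Real.exp_le_exp]
      have := Real.log_two_lt_d9
      norm_num at hv3
      linarith
    have := core ℙ hN0 hθ0 ⌈√(N : ℝ)⌉₊ (Nat.ceil_pos.2 (by linarith)) hmθ hv h8
    rw [div_le_iff₀ (by positivity)]
    linarith
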